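/- arXiv:2104.07025 — 2 statements merged into one kernel-verified Lean document; each statement's English description precedes it below -/
import Mathlib

section
/- Let d, s be positive integers, p an odd prime, and r = 1 or r = -1 such that p^s + r ≥ d ≥ 3, gcd(p,d) = 1, and p^s ≡ -r (mod d), and let m = (d p^s - p^s - r)/d or m = p^s - 1. Then, modulo p^{s+5}, sum_{k=0}^{m} (2dk+r) (r/d)_k^6 / (k!)^6 ≡ ((2r/d)_{(dp^s-p^s-r)/d} / (1)_{(dp^s-p^s-r)/d}) * sum_{k=0}^{(dp^s-p^s-r)/d} ((r/d)_k^3 (1 - r/d)_k / ((k!)^3 (2r/d)_k)) * ( (d-1) p^s - (d-1)^3 p^{3s} * sum_{j=1}^{k} ( 1/(dj)^2 + 1/(dj-d+r)^2 ) ). -/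
open Finset

/-- Rising factorial `(x)_k = x(x+1)⋯(x+k-1)`. -/
def poch (x : ℚ) (k : ℕ) : ℚ := ∏ i ∈ Finset.range k, (x + i)

/-- `a ≡ b (mod p^m)`: the `p`-adic valuation of `a - b` is at least `m`. -/
def pcong (p : ℕ) (m : ℕ) (a b : ℚ) : Prop :=
  a = b ∨ (m : ℤ) ≤ padicValRat p (a - b)

/-- Generalized harmonic number `H_m^{(ℓ)} = ∑_{k=1}^m 1/k^ℓ`. -/
def harm (m ℓ : ℕ) : ℚ := ∑ k ∈ Finset.Icc 1 m, 1 / (k : ℚ) ^ ℓ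

/-!
Put `x = r / d`, `t = x + m₀ = (d - 1) pˢ / d` and `φ_b = wellPoised x (1 - b) (1 + b)`. Up to the
factor `d` the left-hand side is the sum of `(2k + x) φ₀(k)³`, and
`φ₀³ = φ₀ (φ₀ - φ_t)² + 2 φ₀² φ_t - φ₀ φ_t²`. Whipple's transformation turns the sums of
`(2k + x) φ₀² φ_t` and `(2k + x) φ₀ φ_t²` into `t` times sums with weights divisible by `p`, and
their combination agrees with the right-hand side because
`∏ (1 - t² / (y + i)²) ≡ 1 - ∑ t² / (y + i)² (mod p⁴)`.

In the first term write `φ₀ = (φ₀ - ψ) + ψ` with `ψ = wellPoised x 1 (1 + t)`. All these functions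
agree with polynomials in `k (k + x)` on the range of summation, with coefficients given by the
Pfaff–Saalschütz sum, and those of `φ₀ - φ_t` and `φ₀ - ψ` are divisible by `p²` and `p`. Summation
against `2k + x` contributes `pˢ`, which settles the part with `φ₀ - ψ`. Summation against
`(2k + x) ψ` picks out the coefficient of index `m₀` and also contributes `pˢ`; that coefficient of
`(φ₀ - φ_t)²` is divisible by `p⁵`. The terms with `m₀ < k < pˢ` are treated alike, after expanding
around `k = m₀ + 1`, where the coefficients of `φ₀` are divisible by `p²`.
-/

section Poch

theorem poch_zero (x : ℚ) : poch x 0 = 1 := prod_range_zero _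

theorem poch_succ (x : ℚ) (k : ℕ) : poch x (k + 1) = poch x k * (x + k) :=
  prod_range_succ _ _

theorem poch_add (x : ℚ) (k l : ℕ) : poch x (k + l) = poch x k * poch (x + k) l := by
  simp only [poch, prod_range_add, Nat.cast_add, add_assoc]

theorem poch_succ_left (x : ℚ) (k : ℕ) : poch x (k + 1) = x * poch (x + 1) k := by
  simpa [poch] using (congrArg (poch x) (add_comm k 1)).trans (poch_add x 1 k)

theorem poch_ne_zero {x : ℚ} {k : ℕ} (h : ∀ i < k, x + i ≠ 0) : poch x k ≠ 0 :=
  prod_ne_zero_iff.mpr fun i hi => h i (mem_range.mp hi)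

theorem poch_one (k : ℕ) : poch 1 k = k.factorial := by
  induction k with
  | zero => simp [poch_zero]
  | succ k ih => rw [poch_succ, ih, Nat.factorial_succ]; push_cast; ring

theorem poch_neg_natCast_of_lt {N k : ℕ} (h : N < k) : poch (-(N : ℚ)) k = 0 :=
  prod_eq_zero (mem_range.mpr h) (neg_add_cancel _)

theorem poch_one_sub_sub (x : ℚ) (k : ℕ) : poch (1 - x - k) k = (-1) ^ k * poch x k := by
  induction k with
  | zero => simp [poch_zero]
  | succ k ih =>
    rw [poch_succ_left, poch_succ,
      show 1 - x - ((k + 1 : ℕ) : ℚ) + 1 = 1 - x - k by push_cast; ring, ih]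
    push_cast; ring

theorem factorial_add (k l : ℕ) :
    ((k + l).factorial : ℚ) = k.factorial * poch (1 + k) l := by
  rw [← poch_one, poch_add, poch_one]

end Poch

section NewtonBasis

/-- The Newton-type basis `∏_{i<j} (k - i)(k + x + i) / (j!)²` of the polynomials in `k (k + x)`.
It is encoded as a product of two binomial-type factors, so that its `p`-integrality is visible. -/
def newtonBasis (x : ℚ) (j k : ℕ) : ℚ := k.choose j * (poch (x + k) j / j.factorial)

theorem newtonBasis_zero (x : ℚ) (k : ℕ) : newtonBasis x 0 k = 1 := by
  simp [newtonBasis, poch_zero]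

theorem newtonBasis_of_lt (x : ℚ) {j k : ℕ} (h : k < j) : newtonBasis x j k = 0 := by
  simp [newtonBasis, Nat.choose_eq_zero_of_lt h]

theorem choose_succ_mul_cast (n j : ℕ) :
    (n.choose (j + 1) : ℚ) * (j + 1) = n.choose j * (n - j) := by
  rcases le_or_gt j n with h | h
  · have := Nat.choose_succ_right_eq n j
    rw [← Nat.cast_sub h]
    exact_mod_cast this
  · simp [Nat.choose_eq_zero_of_lt h, Nat.choose_eq_zero_of_lt (h.trans j.lt_succ_self)]

theorem succ_mul_choose_cast (n j : ℕ) :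
    ((n : ℚ) + 1) * n.choose j = (n + 1).choose (j + 1) * (j + 1) := by
  exact_mod_cast Nat.add_one_mul_choose_eq n j

theorem newtonBasis_succ (x : ℚ) (j k : ℕ) :
    newtonBasis x (j + 1) k * ((j : ℚ) + 1) ^ 2 =
      newtonBasis x j k * ((k - j) * (k + x + j)) := by
  have hchoose := choose_succ_mul_cast k j
  simp only [newtonBasis, poch_succ, Nat.factorial_succ]
  push_cast
  field_simp
  linear_combination (k + x + j) * poch (x + k) j * hchoose

theorem sum_range_mul_newtonBasis (x : ℚ) (j N : ℕ) :
    ∑ k ∈ range N, (2 * (k : ℚ) + x) * newtonBasis x j k =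
      N.choose (j + 1) * ((N + x - 1) * (poch (x + N) j / j.factorial)) := by
  induction N with
  | zero => simp
  | succ N ih =>
    have hchoose := choose_succ_mul_cast N j
    have hpoch : (x + N) * poch (x + N + 1) j = poch (x + N) j * (x + N + j) := by
      rw [← poch_succ_left, poch_succ]
    rw [sum_range_succ, ih, newtonBasis, Nat.choose_succ_succ]
    push_cast
    rw [← add_assoc x]
    field_simp
    linear_combination (-(N.choose j : ℚ) - N.choose (j + 1)) * hpoch - poch (x + N) j * hchoose

/-- The structure constants of the algebra of polynomials in `k (k + x)`: the coefficient of
`newtonBasis x l` in `newtonBasis x i * newtonBasis x j`. -/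
def newtonMulCoeff (x : ℚ) (i j l : ℕ) : ℚ :=
  if l ≤ i + j then
    (l.choose i : ℚ) * l.choose j * (poch (x + l) (i + j - l) / (i + j - l).factorial)
  else 0

theorem newtonMulCoeff_of_lt (x : ℚ) {i j l : ℕ} (h : i + j < l) :
    newtonMulCoeff x i j l = 0 := if_neg h.not_ge

theorem newtonMulCoeff_zero (x : ℚ) (j l : ℕ) :
    newtonMulCoeff x 0 j l = if l = j then 1 else 0 := by
  rcases lt_trichotomy l j with h | rfl | h
  · simp [newtonMulCoeff, h.ne, Nat.choose_eq_zero_of_lt h]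
  · simp [newtonMulCoeff, poch_zero]
  · rw [newtonMulCoeff_of_lt x (by omega), if_neg h.ne']

theorem newtonMulCoeff_succ_zero (x : ℚ) (i j : ℕ) :
    ((i : ℚ) + 1) ^ 2 * newtonMulCoeff x (i + 1) j 0 = -i * (i + x) * newtonMulCoeff x i j 0 := by
  rcases i with _ | i <;> simp [newtonMulCoeff]

theorem newtonMulCoeff_succ_succ (x : ℚ) (i j l : ℕ) :
    ((i : ℚ) + 1) ^ 2 * newtonMulCoeff x (i + 1) j (l + 1) =
      ((l : ℚ) + 1) ^ 2 * newtonMulCoeff x i j l +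
        ((l : ℚ) + 1 - i) * (l + 1 + i + x) * newtonMulCoeff x i j (l + 1) := by
  have hi := choose_succ_mul_cast (l + 1) i
  have hi' := succ_mul_choose_cast l i
  have hj : ((l : ℚ) + 1) * l.choose j = (l + 1).choose j * ((l : ℚ) + 1 - j) := by
    rw [succ_mul_choose_cast, choose_succ_mul_cast]; push_cast; ring
  push_cast at hi
  rcases lt_trichotomy l (i + j) with h | rfl | h
  · obtain ⟨q, hq⟩ : ∃ q, i + j = l + 1 + q := ⟨i + j - l - 1, by omega⟩
    have hjq : (j : ℚ) = l + 1 + q - i := by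
      rw [eq_sub_iff_add_eq']; exact_mod_cast hq
    simp only [newtonMulCoeff]
    rw [if_pos (by omega), if_pos (by omega), if_pos (by omega),
      show i + 1 + j - (l + 1) = q + 1 by omega, show i + j - l = q + 1 by omega,
      show i + j - (l + 1) = q by omega, Nat.factorial_succ, poch_succ (x + (l + 1 : ℕ)),
      poch_succ_left (x + l)]
    push_cast
    rw [add_assoc x (l : ℚ) 1]
    field_simp
    rw [hjq] at hj
    set P := poch (x + (l + 1)) q
    linear_combination ((i : ℚ) + 1) * (l + 1).choose j * P * (x + l + 1 + q) * hi
      - P * (x + l) * (((l : ℚ) + 1) * l.choose j) * (hi' + hi)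
      - P * (x + l) * (l + 1).choose i * (l + 1 - i) * hj
  · rw [newtonMulCoeff_of_lt x (i + j).lt_succ_self]
    simp only [newtonMulCoeff]
    rw [if_pos (by omega), if_pos le_rfl, show i + 1 + j - (i + j + 1) = 0 by omega, Nat.sub_self,
      poch_zero, poch_zero]
    push_cast at hi' hj ⊢
    linear_combination -(i + j + 1 : ℚ) * (i + j).choose j * hi'
      - (i + j + 1).choose (i + 1) * (i + 1) * hj
  · rw [newtonMulCoeff_of_lt x h, newtonMulCoeff_of_lt x (by omega),
      newtonMulCoeff_of_lt x (by omega)]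
    ring

theorem newtonBasis_mul_sub_mul_add (x : ℚ) (i l k : ℕ) :
    newtonBasis x l k * ((k - i) * (k + x + i)) =
      ((l : ℚ) + 1) ^ 2 * newtonBasis x (l + 1) k +
        ((l : ℚ) - i) * (l + i + x) * newtonBasis x l k := by
  linear_combination -newtonBasis_succ x l k

theorem newtonBasis_mul_newtonBasis (x : ℚ) (i j : ℕ) {k n : ℕ} (hk : k < n) :
    newtonBasis x i k * newtonBasis x j k =
      ∑ l ∈ range n, newtonMulCoeff x i j l * newtonBasis x l k := by
  induction i with
  | zero =>
    simp only [newtonMulCoeff_zero, newtonBasis_zero, one_mul, ite_mul, zero_mul, sum_ite_eq',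
      mem_range]
    split_ifs with h
    · rfl
    · exact newtonBasis_of_lt x (by omega)
  | succ i ih =>
    obtain ⟨M, rfl⟩ := Nat.exists_eq_succ_of_ne_zero (Nat.ne_zero_of_lt hk)
    have hi : ((i : ℚ) + 1) ^ 2 ≠ 0 := by positivity
    rw [← mul_right_inj' hi]
    calc ((i : ℚ) + 1) ^ 2 * (newtonBasis x (i + 1) k * newtonBasis x j k)
        = newtonBasis x i k * newtonBasis x j k * ((k - i) * (k + x + i)) := by
          linear_combination newtonBasis x j k * newtonBasis_succ x i k
      _ = ∑ l ∈ range (M + 1), newtonMulCoeff x i j l * (((l : ℚ) + 1) ^ 2 *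
            newtonBasis x (l + 1) k) +
          ∑ l ∈ range (M + 1), newtonMulCoeff x i j l * (((l : ℚ) - i) * (l + i + x) *
            newtonBasis x l k) := by
          rw [ih, sum_mul, ← sum_add_distrib]
          refine sum_congr rfl fun l _ => ?_
          linear_combination newtonMulCoeff x i j l * newtonBasis_mul_sub_mul_add x i l k
      _ = ((i : ℚ) + 1) ^ 2 *
            ∑ l ∈ range (M + 1), newtonMulCoeff x (i + 1) j l * newtonBasis x l k := by
          rw [mul_sum, sum_range_succ, newtonBasis_of_lt x hk, mul_zero, mul_zero, add_zero,
            sum_range_succ', sum_range_succ', ← add_assoc, ← sum_add_distrib]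
          congr 1
          · refine sum_congr rfl fun l _ => ?_
            push_cast
            linear_combination -newtonBasis x (l + 1) k * newtonMulCoeff_succ_succ x i j l
          · push_cast
            linear_combination -newtonBasis x 0 k * newtonMulCoeff_succ_zero x i j

end NewtonBasis

section WellPoised

/-- The very-well-poised factor `(1 + x - c)_k (1 + x - e)_k / ((c)_k (e)_k)`: as a function of `k`
it has the reflection symmetry `k ↦ -x - k` of `newtonBasis x j`. -/
def wellPoised (x c e : ℚ) (k : ℕ) : ℚ :=
  poch (1 + x - c) k * poch (1 + x - e) k / (poch c k * poch e k)

theorem wellPoised_zero (x c e : ℚ) : wellPoised x c e 0 = 1 := by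
  simp [wellPoised, poch_zero]

theorem wellPoised_one_left (x e : ℚ) (k : ℕ) :
    wellPoised x 1 e k = poch x k * poch (1 + x - e) k / (k.factorial * poch e k) := by
  rw [wellPoised, poch_one, add_sub_cancel_left]

theorem wellPoised_add_natCast (x c : ℚ) (N k : ℕ) :
    wellPoised x c (1 + x + N) k =
      poch (1 + x - c) k * poch (-(N : ℚ)) k / (poch c k * poch (1 + x + N) k) := by
  rw [wellPoised, sub_add_cancel_left]

theorem wellPoised_succ (x : ℚ) {c e : ℚ} {k : ℕ} (hc : c + k ≠ 0) (he : e + k ≠ 0) :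
    (c + k) * (e + k) * wellPoised x c e (k + 1) =
      (1 + x - c + k) * (1 + x - e + k) * wellPoised x c e k := by
  simp only [wellPoised, poch_succ, mul_div_assoc']
  field_simp

theorem wellPoised_add (x c e : ℚ) (i l : ℕ) :
    wellPoised x c e (i + l) =
      wellPoised x c e i * wellPoised (x + 2 * i) (c + i) (e + i) l := by
  have hshift (a : ℚ) : 1 + (x + 2 * i) - (a + i) = 1 + x - a + i := by ring
  simp only [wellPoised, poch_add, hshift]
  rw [div_mul_div_comm]
  congr 1 <;> ring

end WellPoised

section Saalschutz

/-- The function `f` agrees on `{0, …, n - 1}` with `∑ j < n, a j * newtonBasis x j`. -/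
def HasNewtonExpansion (x : ℚ) (n : ℕ) (a f : ℕ → ℚ) : Prop :=
  ∀ k < n, f k = ∑ j ∈ range n, a j * newtonBasis x j k

/-- The coefficients of `wellPoised x c e` in the basis `newtonBasis x`, as provided by the
Pfaff–Saalschütz summation. -/
def saalschutzCoeff (x c e : ℚ) (j : ℕ) : ℚ :=
  (-1) ^ j * (j.factorial * poch (c + e - 1 - x) j / (poch c j * poch e j))

theorem saalschutzCoeff_succ (x : ℚ) {c e : ℚ} {j : ℕ} (hc : c + j ≠ 0) (he : e + j ≠ 0) :
    (c + j) * (e + j) * saalschutzCoeff x c e (j + 1) =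
      -((j + 1) * (c + e - 1 - x + j)) * saalschutzCoeff x c e j := by
  simp only [saalschutzCoeff, poch_succ, Nat.factorial_succ, pow_succ]
  push_cast
  field_simp

theorem newtonBasis_succ_succ (x : ℚ) (j k : ℕ) :
    newtonBasis x (j + 1) (k + 1) * ((j : ℚ) + 1) ^ 2 =
      newtonBasis (x + 1) j k * ((k + 1) * (k + x + 1 + j)) := by
  have hchoose := succ_mul_choose_cast k j
  simp only [newtonBasis, poch_succ, Nat.factorial_succ]
  push_cast
  rw [show x + 1 + (k : ℚ) = x + (k + 1) by ring]
  field_simp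
  linear_combination -(k + x + 1 + j) * poch (x + (k + 1)) j * hchoose

theorem newtonBasis_succ_eq_newtonBasis_add_one (x : ℚ) (j k : ℕ) :
    newtonBasis x (j + 1) k * ((j : ℚ) + 1) ^ 2 =
      newtonBasis (x + 1) j k * ((k - j) * (k + x)) := by
  have hchoose := choose_succ_mul_cast k j
  simp only [newtonBasis, poch_succ_left, Nat.factorial_succ]
  push_cast
  rw [add_right_comm x 1]
  field_simp
  linear_combination (k + x) * poch (x + k + 1) j * hchoose

variable {x c e : ℚ}

theorem sum_saalschutzCoeff_mul (hc : ∀ i : ℕ, c + i ≠ 0) (he : ∀ i : ℕ, e + i ≠ 0) (k J : ℕ) :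
    ∑ j ∈ range (J + 1), saalschutzCoeff x c e j *
        ((c + k) * (e + k) * newtonBasis x j (k + 1) -
          (1 + x - c + k) * (1 + x - e + k) * newtonBasis x j k) =
      (2 * k + 1 + x) * (c + e - 1 - x + J) * saalschutzCoeff x c e J *
        newtonBasis (x + 1) J k := by
  induction J with
  | zero => simp [newtonBasis_zero, saalschutzCoeff, poch_zero]; ring
  | succ J ih =>
    have hsq : ((J : ℚ) + 1) ^ 2 ≠ 0 := by positivity
    rw [sum_range_succ, ih, ← mul_left_inj' hsq]
    push_cast
    linear_combination
      saalschutzCoeff x c e (J + 1) * (c + k) * (e + k) * newtonBasis_succ_succ x J k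
      - saalschutzCoeff x c e (J + 1) * (1 + x - c + k) * (1 + x - e + k) *
          newtonBasis_succ_eq_newtonBasis_add_one x J k
      - (2 * k + 1 + x) * (c + e - 1 - x + (J + 1)) * saalschutzCoeff x c e (J + 1) *
          newtonBasis_succ (x + 1) J k
      + (2 * k + 1 + x) * newtonBasis (x + 1) J k * (J + 1) *
          saalschutzCoeff_succ x (hc J) (he J)

/-- The Pfaff–Saalschütz summation. -/
theorem hasNewtonExpansion_wellPoised (hc : ∀ i : ℕ, c + i ≠ 0) (he : ∀ i : ℕ, e + i ≠ 0)
    (n : ℕ) : HasNewtonExpansion x n (saalschutzCoeff x c e) (wellPoised x c e) := by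
  intro k hk
  obtain ⟨M, rfl⟩ := Nat.exists_eq_succ_of_ne_zero (Nat.ne_zero_of_lt hk)
  induction k with
  | zero =>
    rw [sum_range_succ', sum_eq_zero fun j _ => by rw [newtonBasis_of_lt x j.succ_pos, mul_zero]]
    simp [wellPoised_zero, newtonBasis_zero, saalschutzCoeff, poch_zero]
  | succ k ih =>
    have hsum := sum_saalschutzCoeff_mul (x := x) hc he k M
    rw [newtonBasis_of_lt (x + 1) (by omega : k < M), mul_zero] at hsum
    have hk₀ : (c + k) * (e + k) ≠ 0 := mul_ne_zero (hc k) (he k)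
    rw [← mul_right_inj' hk₀, wellPoised_succ x (hc k) (he k), ih (by omega), eq_comm,
      ← sub_eq_zero, ← hsum, mul_sum, mul_sum, ← sum_sub_distrib]
    exact sum_congr rfl fun j _ => by ring

end Saalschutz

section Dougall

variable {x β γ : ℚ}

theorem sum_dougall_sub (hx : ∀ i : ℕ, x + i ≠ 0) (hβ : ∀ i : ℕ, β + i ≠ 0)
    (hγ : ∀ i : ℕ, γ + i ≠ 0) (N J : ℕ) :
    ∑ k ∈ range (J + 1),
        ((β + N) * (γ + N) *
            ((2 * k + x) * (wellPoised x 1 β k * wellPoised x γ (1 + x + (N + 1 : ℕ)) k)) -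
          (x + N + 1) * (β + γ - 1 - x + N) *
            ((2 * k + x) * (wellPoised x 1 β k * wellPoised x γ (1 + x + N) k))) =
      poch x (J + 1) * poch (1 + x - β) (J + 1) * poch (1 + x - γ) (J + 1) * poch (-(N : ℚ)) J /
        (J.factorial * poch β J * poch γ J * poch (2 + x + N) J) := by
  have hx₂ (i : ℕ) : 2 + x + N + i ≠ 0 := by
    convert hx (2 + N + i) using 1
    push_cast; ring
  have hx₁ : 1 + x + N ≠ 0 := by
    convert hx (1 + N) using 1
    push_cast; ring
  induction J with
  | zero => simp [wellPoised_zero, poch_zero, poch_succ]; ring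
  | succ J ih =>
    have hJ : (J.factorial : ℚ) ≠ 0 := by positivity
    have hβ₀ := hβ J
    have hγ₀ := hγ J
    have hx₀ := hx₂ J
    have hpochβ : poch β J ≠ 0 := poch_ne_zero fun i _ => hβ i
    have hpochγ : poch γ J ≠ 0 := poch_ne_zero fun i _ => hγ i
    have hpochx : poch (2 + x + N) J ≠ 0 := poch_ne_zero fun i _ => hx₂ i
    simp only [wellPoised_one_left, wellPoised_add_natCast] at ih ⊢
    rw [sum_range_succ, ih, show (-((N + 1 : ℕ) : ℚ)) = -N - 1 by push_cast; ring,
      poch_succ_left (-(N : ℚ) - 1), sub_add_cancel,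
      show 1 + x + ((N + 1 : ℕ) : ℚ) = 2 + x + N by push_cast; ring,
      poch_succ_left (1 + x + N), show 1 + x + (N : ℚ) + 1 = 2 + x + N by ring]
    simp only [poch_succ, Nat.factorial_succ]
    push_cast
    field_simp
    ring

/-- Dougall's summation of a terminating very-well-poised `₅F₄`. -/
theorem sum_wellPoised (hx : ∀ i : ℕ, x + i ≠ 0) (hβ : ∀ i : ℕ, β + i ≠ 0)
    (hγ : ∀ i : ℕ, γ + i ≠ 0) (N : ℕ) :
    ∑ k ∈ range (N + 1), (2 * k + x) * (wellPoised x 1 β k * wellPoised x γ (1 + x + N) k) =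
      poch x (N + 1) * poch (β + γ - 1 - x) N / (poch β N * poch γ N) := by
  induction N with
  | zero => simp [wellPoised_zero, poch_zero, poch_succ]
  | succ N ih =>
    have hlast : wellPoised x γ (1 + x + N) (N + 1) = 0 := by
      rw [wellPoised_add_natCast, poch_neg_natCast_of_lt N.lt_succ_self, mul_zero, zero_div]
    have hsub := sum_dougall_sub hx hβ hγ N (N + 1)
    rw [poch_neg_natCast_of_lt N.lt_succ_self, mul_zero, zero_div, sum_sub_distrib, ← mul_sum,
      ← mul_sum,
      sum_range_succ (fun k : ℕ => (2 * (k : ℚ) + x) * (_ * wellPoised x γ (1 + x + N) k)),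
      ih, hlast, mul_zero, mul_zero, add_zero, sub_eq_zero] at hsub
    have hN : (β + N) * (γ + N) ≠ 0 := mul_ne_zero (hβ N) (hγ N)
    have hpochβ : poch β N ≠ 0 := poch_ne_zero fun i _ => hβ i
    have hpochγ : poch γ N ≠ 0 := poch_ne_zero fun i _ => hγ i
    have hβ₀ := hβ N
    have hγ₀ := hγ N
    rw [← mul_right_inj' hN, hsub]
    simp only [poch_succ]
    push_cast
    field_simp
    ring

end Dougall

section Whipple

variable {x β γ : ℚ}

theorem newtonBasis_mul_wellPoised_add (hβ : ∀ i : ℕ, β + i ≠ 0) (i l : ℕ) :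
    newtonBasis x i (i + l) * wellPoised (x + 2 * i) (1 + i) (β + i) l =
      poch (x + i) i / i.factorial * wellPoised (x + 2 * i) 1 (β + i) l := by
  have hi : (i.factorial : ℚ) ≠ 0 := by positivity
  have hl : (l.factorial : ℚ) ≠ 0 := by positivity
  have hpoch₁ : poch (1 + i) l ≠ 0 := poch_ne_zero fun j _ => by positivity
  have hpochβ : poch (β + i) l ≠ 0 := poch_ne_zero fun j _ => by
    simpa [add_assoc] using hβ (i + j)
  have hchoose : ((i + l).choose i : ℚ) = poch (1 + i) l / l.factorial := by
    rw [Nat.cast_add_choose, factorial_add]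
    field_simp
  have hpoch : poch (x + i) l * poch (x + (i + l : ℕ)) i =
      poch (x + i) i * poch (x + 2 * i) l := by
    rw [Nat.cast_add, ← add_assoc x, ← poch_add, add_comm l, poch_add, add_assoc x, ← two_mul]
  rw [wellPoised_one_left, wellPoised, newtonBasis, hchoose,
    show 1 + (x + 2 * i) - (1 + i) = x + (i : ℚ) by ring,
    show 1 + (x + 2 * i) - (β + i) = 1 + x - β + i by ring]
  field_simp
  rw [mul_comm (i : ℚ) 2]
  linear_combination poch (1 + x - β + i) l * hpoch

theorem two_mul_add_mul_wellPoised_mul_newtonBasis_add (hβ : ∀ i : ℕ, β + i ≠ 0) (i l N : ℕ) :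
    (2 * ((i + l : ℕ) : ℚ) + x) * (wellPoised x 1 β (i + l) *
        wellPoised x γ (1 + x + (i + N : ℕ)) (i + l)) * newtonBasis x i (i + l) =
      wellPoised x 1 β i * wellPoised x γ (1 + x + (i + N : ℕ)) i *
        (poch (x + i) i / i.factorial) *
        ((2 * l + (x + 2 * i)) * (wellPoised (x + 2 * i) 1 (β + i) l *
          wellPoised (x + 2 * i) (γ + i) (1 + (x + 2 * i) + N) l)) := by
  rw [wellPoised_add, wellPoised_add x γ,
    show 1 + x + ((i + N : ℕ) : ℚ) + i = 1 + (x + 2 * i) + N by push_cast; ring]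
  push_cast
  linear_combination wellPoised x 1 β i * wellPoised x γ (1 + x + (i + N)) i *
    (2 * l + (x + 2 * i)) * wellPoised (x + 2 * i) (γ + i) (1 + (x + 2 * i) + N) l *
    newtonBasis_mul_wellPoised_add (x := x) hβ i l

-- The index `i` of the basis element only shifts the summation, and the shifted sum is again of
-- Dougall's type, with parameters `x + 2 i`, `β + i`, `γ + i`.
theorem sum_wellPoised_mul_newtonBasis (hx : ∀ i : ℕ, x + i ≠ 0) (hβ : ∀ i : ℕ, β + i ≠ 0)
    (hγ : ∀ i : ℕ, γ + i ≠ 0) {i m : ℕ} (hi : i ≤ m) :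
    ∑ k ∈ range (m + 1),
        (2 * k + x) * (wellPoised x 1 β k * wellPoised x γ (1 + x + m) k) * newtonBasis x i k =
      poch x (m + 1) / (poch β m * poch γ m) *
        (poch (1 + x - β) i * poch (1 + x - γ) i * poch (-(m : ℚ)) i *
          poch (β + γ - 1 - x) (m - i) / (i.factorial : ℚ) ^ 2) := by
  obtain ⟨N, rfl⟩ := Nat.exists_eq_add_of_le hi
  have hxm (j : ℕ) : 1 + x + (i + N : ℕ) + j ≠ 0 := by
    convert hx (1 + i + N + j) using 1
    push_cast; ring
  have hpoch : poch x i * poch (x + i) i * poch (x + 2 * i) (N + 1) =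
      poch x (i + N + 1) * poch (1 + x + (i + N : ℕ)) i := by
    rw [show 1 + x + ((i + N : ℕ) : ℚ) = x + (i + N + 1 : ℕ) by push_cast; ring, ← poch_add,
      ← poch_add, show x + 2 * (i : ℚ) = x + (i + i : ℕ) by push_cast; ring, ← poch_add]
    congr 1; omega
  have hi₀ : (i.factorial : ℚ) ≠ 0 := by positivity
  have hpochβ : poch β (i + N) ≠ 0 := poch_ne_zero fun j _ => hβ j
  have hpochγ : poch γ (i + N) ≠ 0 := poch_ne_zero fun j _ => hγ j
  have hpochx : poch (1 + x + (i + N : ℕ)) i ≠ 0 := poch_ne_zero fun j _ => hxm j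
  rw [poch_add, mul_ne_zero_iff] at hpochβ hpochγ
  obtain ⟨hpochβ, hpochβ'⟩ := hpochβ
  obtain ⟨hpochγ, hpochγ'⟩ := hpochγ
  rw [add_assoc i N 1, sum_range_add, sum_eq_zero fun k hk => by
    rw [newtonBasis_of_lt x (mem_range.mp hk), mul_zero], zero_add,
    sum_congr rfl fun l _ => two_mul_add_mul_wellPoised_mul_newtonBasis_add hβ i l N,
    ← mul_sum, sum_wellPoised (fun j => by simpa [add_assoc] using hx (2 * i + j))
      (fun j => by simpa [add_assoc] using hβ (i + j))
      (fun j => by simpa [add_assoc] using hγ (i + j)), wellPoised_one_left,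
    wellPoised_add_natCast, Nat.add_sub_cancel_left, poch_add β, poch_add γ,
    show β + i + (γ + i) - 1 - (x + 2 * i) = β + γ - 1 - x by ring]
  field_simp
  rw [mul_comm (i : ℚ) 2]
  linear_combination poch (1 + x - β) i * poch (1 + x - γ) i * poch (-((i + N : ℕ) : ℚ)) i *
    poch (β + γ - 1 - x) N * hpoch

theorem sum_wellPoised_mul_newtonBasis_eq_ite (hx : ∀ i : ℕ, x + i ≠ 0) (l m : ℕ) :
    ∑ k ∈ range (m + 1), (2 * k + x) * wellPoised x 1 (1 + x + m) k * newtonBasis x l k =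
      if l = m then (-1) ^ m * poch x (m + 1) / m.factorial else 0 := by
  have hone (k : ℕ) : wellPoised x 1 x k = 1 := by
    have hpoch : poch x k ≠ 0 := poch_ne_zero fun i _ => hx i
    have hk : (k.factorial : ℚ) ≠ 0 := by positivity
    rw [wellPoised_one_left, add_sub_cancel_right, poch_one]
    field_simp
  rcases lt_or_ge m l with h | h
  · rw [if_neg h.ne']
    refine sum_eq_zero fun k hk => ?_
    rw [newtonBasis_of_lt x ((Nat.lt_succ_iff.mp (mem_range.mp hk)).trans_lt h), mul_zero]
  have hsum := sum_wellPoised_mul_newtonBasis hx hx (γ := 1) (fun i => by positivity) h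
  simp only [hone, one_mul] at hsum
  rw [hsum, show x + 1 - 1 - x = -((0 : ℕ) : ℚ) by push_cast; ring]
  split_ifs with hlm
  · subst hlm
    have hpoch : poch x l ≠ 0 := poch_ne_zero fun i _ => hx i
    have hneg : poch (-(l : ℚ)) l = (-1) ^ l * l.factorial := by
      rw [← poch_one, ← poch_one_sub_sub, sub_self, zero_sub]
    rw [Nat.sub_self, poch_zero, poch_one, add_sub_cancel_right, add_sub_cancel_left, poch_one,
      hneg]
    field_simp
  · rw [poch_neg_natCast_of_lt (by omega : 0 < m - l), mul_zero, zero_div, mul_zero]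

theorem HasNewtonExpansion.sum_wellPoised_mul {n : ℕ} {a f : ℕ → ℚ}
    (hf : HasNewtonExpansion x n a f) (hx : ∀ i : ℕ, x + i ≠ 0) {m : ℕ} (hm : m < n) :
    ∑ k ∈ range (m + 1), (2 * k + x) * wellPoised x 1 (1 + x + m) k * f k =
      (-1) ^ m * poch x (m + 1) / m.factorial * a m := by
  calc _ = ∑ k ∈ range (m + 1), ∑ l ∈ range n,
        a l * ((2 * k + x) * wellPoised x 1 (1 + x + m) k * newtonBasis x l k) := by
        refine sum_congr rfl fun k hk => ?_
        rw [hf k (by have := mem_range.mp hk; omega), mul_sum]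
        exact sum_congr rfl fun l _ => by ring
    _ = _ := by
        rw [sum_comm]
        simp only [← mul_sum, sum_wellPoised_mul_newtonBasis_eq_ite hx, mul_ite, mul_zero,
          sum_ite_eq', mem_range, if_pos hm]
        ring

/-- Whipple's transformation of a terminating very-well-poised `₇F₆` into a balanced `₄F₃`. -/
theorem sum_wellPoised_mul_wellPoised {c e : ℚ} (hx : ∀ i : ℕ, x + i ≠ 0)
    (hβ : ∀ i : ℕ, β + i ≠ 0) (hγ : ∀ i : ℕ, γ + i ≠ 0) (hc : ∀ i : ℕ, c + i ≠ 0)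
    (he : ∀ i : ℕ, e + i ≠ 0) (m : ℕ) :
    ∑ k ∈ range (m + 1), (2 * k + x) * (wellPoised x 1 β k * wellPoised x γ (1 + x + m) k) *
        wellPoised x c e k =
      poch x (m + 1) / (poch β m * poch γ m) *
        ∑ j ∈ range (m + 1), saalschutzCoeff x c e j *
          (poch (1 + x - β) j * poch (1 + x - γ) j * poch (-(m : ℚ)) j *
            poch (β + γ - 1 - x) (m - j) / (j.factorial : ℚ) ^ 2) := by
  calc _ = ∑ k ∈ range (m + 1), ∑ j ∈ range (m + 1), saalschutzCoeff x c e j *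
        ((2 * k + x) * (wellPoised x 1 β k * wellPoised x γ (1 + x + m) k) *
          newtonBasis x j k) := by
        refine sum_congr rfl fun k hk => ?_
        rw [hasNewtonExpansion_wellPoised hc he (m + 1) k (mem_range.mp hk), mul_sum]
        exact sum_congr rfl fun j _ => by ring
    _ = _ := by
        rw [sum_comm, mul_sum]
        refine sum_congr rfl fun j hj => ?_
        rw [← mul_sum, sum_wellPoised_mul_newtonBasis hx hβ hγ
          (Nat.lt_succ_iff.mp (mem_range.mp hj))]
        ring

/-- The product `∏ i < k, (1 - t² / (y + i)²)`, the source of the harmonic-type sums on the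
right-hand side of the supercongruence. -/
def symmRatio (y t : ℚ) (k : ℕ) : ℚ := poch (y + t) k * poch (y - t) k / poch y k ^ 2

theorem symmRatio_eq_prod {y : ℚ} {k : ℕ} (hy : ∀ i < k, y + i ≠ 0) (t : ℚ) :
    symmRatio y t k = ∏ i ∈ range k, (1 - t ^ 2 / (y + i) ^ 2) := by
  rw [symmRatio, poch, poch, poch, ← prod_mul_distrib, ← prod_pow, ← prod_div_distrib]
  refine prod_congr rfl fun i hi => ?_
  have := hy i (mem_range.mp hi)
  field_simp
  ring

/-- The summand of the balanced truncated series on the right-hand side of the supercongruence, with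
its constant factor `(2x)_m / (1)_m`, for `x = r / d`. -/
def whippleWeight (x : ℚ) (m k : ℕ) : ℚ :=
  poch (2 * x) m / poch 1 m *
    (poch x k ^ 3 * poch (1 - x) k / ((k.factorial : ℚ) ^ 3 * poch (2 * x) k))

theorem sum_wellPoised_mul_wellPoised_one_sub_one_add {b t : ℚ} {m : ℕ}
    (hx : ∀ z : ℤ, 2 * x + z ≠ 0) (ht : x + m = t)
    (hb : ∀ i : ℕ, 1 - b + i ≠ 0) (hb' : ∀ i : ℕ, 1 + b + i ≠ 0) :
    ∑ k ∈ range (m + 1), (2 * k + x) * (wellPoised x 1 1 k * wellPoised x (1 - t) (1 + t) k) *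
        wellPoised x (1 - b) (1 + b) k =
      t * ∑ k ∈ range (m + 1), whippleWeight x m k * (symmRatio x t k / symmRatio 1 b k) := by
  have hxz (z : ℤ) : x + z ≠ 0 := fun h => hx (2 * z) (by push_cast; linear_combination 2 * h)
  have hx₀ (i : ℕ) : x + i ≠ 0 := mod_cast hxz i
  have htz (i : ℕ) : 1 - t + i ≠ 0 := fun h => hxz (m - 1 - i) (by
    push_cast; linear_combination ht - h)
  rw [← ht] at htz ⊢
  rw [← add_assoc 1, sum_wellPoised_mul_wellPoised hx₀ (fun i => by positivity) htz hb hb',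
    mul_sum, mul_sum]
  refine sum_congr rfl fun j hj => ?_
  obtain ⟨q, rfl⟩ := Nat.exists_eq_add_of_le (Nat.lt_succ_iff.mp (mem_range.mp hj))
  have hrev : poch (1 - (x + (j + q : ℕ))) (j + q) = (-1) ^ (j + q) * poch x (j + q) := by
    rw [← poch_one_sub_sub, sub_sub]
  have hrev' : poch (1 + (1 - (x + (j + q : ℕ))) - 1 - x) q = (-1) ^ q * poch (2 * x + j) q := by
    rw [← poch_one_sub_sub]; congr 1; push_cast; ring
  have hpoch₂ : poch (2 * x) j ≠ 0 := poch_ne_zero fun i _ => mod_cast hx i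
  have hpochx : poch x j ≠ 0 := poch_ne_zero fun i _ => hx₀ i
  have hpochx' : poch x (j + q) ≠ 0 := poch_ne_zero fun i _ => hx₀ i
  have hb₀ : poch (1 - b) j ≠ 0 := poch_ne_zero fun i _ => hb i
  have hb₀' : poch (1 + b) j ≠ 0 := poch_ne_zero fun i _ => hb' i
  rw [whippleWeight, symmRatio, symmRatio, saalschutzCoeff, hrev, Nat.add_sub_cancel_left, hrev',
    poch_succ, poch_add (2 * x), pow_add, poch_one, poch_one, add_sub_cancel_left,
    show 1 + x - (1 - (x + (j + q : ℕ))) = x + (x + (j + q : ℕ)) by ring,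
    show -((j + q : ℕ) : ℚ) = x - (x + (j + q : ℕ)) by ring,
    show 1 - b + (1 + b) - 1 - x = 1 - x by ring]
  generalize poch (2 * x) j = G at hpoch₂ ⊢
  field_simp

end Whipple

section PadicBall

/-- The `p`-adic ball `{y | |y|_p ≤ p⁻ᵉ}` of rational numbers; membership of `a - b` expresses
the congruence `a ≡ b (mod pᵉ)`. -/
def padicBall (p : ℕ) [Fact p.Prime] (e : ℕ) : AddSubgroup ℚ where
  carrier := {y | padicNorm p y ≤ (p : ℚ) ^ (-(e : ℤ))}
  zero_mem' := by simp
  add_mem' hx hy := padicNorm.nonarchimedean.trans (max_le hx hy)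
  neg_mem' {y} hy := by rwa [Set.mem_ofPred_eq, padicNorm.neg]

variable {p : ℕ} [hp : Fact p.Prime] {e f s : ℕ} {x y : ℚ}

theorem mem_padicBall : y ∈ padicBall p e ↔ padicNorm p y ≤ (p : ℚ) ^ (-(e : ℤ)) := Iff.rfl

theorem pcong_of_sub_mem_padicBall (h : x - y ∈ padicBall p e) : pcong p e x y := by
  refine or_iff_not_imp_left.mpr fun hne => ?_
  rw [mem_padicBall, padicNorm.eq_zpow_of_nonzero (sub_ne_zero.mpr hne),
    zpow_le_zpow_iff_right₀ (mod_cast hp.out.one_lt)] at h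
  omega

theorem padicBall_antitone : Antitone (padicBall p) := fun _ _ h _ hx =>
  (mem_padicBall.mp hx).trans <| zpow_le_zpow_right₀ (mod_cast hp.out.one_le) (by omega)

theorem mem_padicBall_zero (h : y ∈ padicBall p e) : y ∈ padicBall p 0 :=
  padicBall_antitone e.zero_le h

theorem mul_mem_padicBall (hx : x ∈ padicBall p e) (hy : y ∈ padicBall p f) :
    x * y ∈ padicBall p (e + f) := by
  rw [mem_padicBall, padicNorm.mul, Nat.cast_add, neg_add,
    zpow_add₀ (mod_cast hp.out.ne_zero)]
  exact mul_le_mul hx hy (padicNorm.nonneg _) (by positivity)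

theorem mul_mem_padicBall_left (hx : x ∈ padicBall p 0) (hy : y ∈ padicBall p e) :
    x * y ∈ padicBall p e := by
  simpa only [zero_add] using mul_mem_padicBall hx hy

theorem mul_mem_padicBall_right (hx : x ∈ padicBall p e) (hy : y ∈ padicBall p 0) :
    x * y ∈ padicBall p e := by
  simpa only [add_zero] using mul_mem_padicBall hx hy

theorem intCast_mem_padicBall (z : ℤ) : (z : ℚ) ∈ padicBall p 0 := by
  simpa [mem_padicBall] using padicNorm.of_int z

theorem natCast_mem_padicBall (n : ℕ) : (n : ℚ) ∈ padicBall p 0 :=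
  mod_cast intCast_mem_padicBall (p := p) n

theorem one_mem_padicBall : (1 : ℚ) ∈ padicBall p 0 :=
  mod_cast natCast_mem_padicBall (p := p) 1

theorem neg_one_pow_mem_padicBall (j : ℕ) : (-1 : ℚ) ^ j ∈ padicBall p 0 :=
  mod_cast intCast_mem_padicBall (p := p) ((-1) ^ j)

theorem pow_mem_padicBall (hy : y ∈ padicBall p e) (k : ℕ) : y ^ k ∈ padicBall p (k * e) := by
  induction k with
  | zero => simpa using one_mem_padicBall
  | succ k ih => rw [pow_succ, add_mul, one_mul]; exact mul_mem_padicBall ih hy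

theorem prime_pow_mem_padicBall (s : ℕ) : (p : ℚ) ^ s ∈ padicBall p s := by
  have h := (padicNorm.dvd_iff_norm_le (p := p) (n := s) (z := ((p ^ s : ℕ) : ℤ))).mp dvd_rfl
  rw [mem_padicBall]
  exact_mod_cast h

theorem natCast_notMem_padicBall {i : ℕ} (hi : 0 < i) (his : i < p ^ s) :
    (i : ℚ) ∉ padicBall p s := fun h => by
  have hdvd := (padicNorm.dvd_iff_norm_le (p := p) (n := s) (z := i)).mpr
    (mod_cast mem_padicBall.mp h)
  exact his.not_ge (Nat.le_of_dvd hi (mod_cast hdvd))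

theorem mem_padicBall_one_iff : y ∈ padicBall p 1 ↔ padicNorm p y < 1 := by
  have hp₁ : (1 : ℚ) < p := mod_cast hp.out.one_lt
  rcases eq_or_ne y 0 with rfl | hy
  · simp [zero_mem]
  · rw [mem_padicBall, padicNorm.eq_zpow_of_nonzero hy, zpow_lt_one_iff_right₀ hp₁,
      zpow_le_zpow_iff_right₀ hp₁]
    omega

theorem div_mem_padicBall_one (hx : x ∈ padicBall p s) (hy : y ∉ padicBall p s) :
    x / y ∈ padicBall p 1 := by
  rw [mem_padicBall, not_le] at hy
  rw [mem_padicBall_one_iff, padicNorm.div, div_lt_one (hy.trans_le' (by positivity))]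
  exact (mem_padicBall.mp hx).trans_lt hy

section Unit

variable (hy : y - 1 ∈ padicBall p 1)
include hy

theorem padicNorm_eq_one : padicNorm p y = 1 := by
  rw [mem_padicBall_one_iff] at hy
  have h := padicNorm.add_eq_max_of_ne (p := p) (q := y - 1) (r := 1)
    (by rw [padicNorm.one]; exact hy.ne)
  rwa [sub_add_cancel, padicNorm.one, max_eq_right hy.le] at h

theorem ne_zero_of_sub_one_mem : y ≠ 0 := by
  rintro rfl
  simpa using padicNorm_eq_one hy

theorem div_mem_padicBall (hx : x ∈ padicBall p e) : x / y ∈ padicBall p e := by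
  rwa [mem_padicBall, padicNorm.div, padicNorm_eq_one hy, div_one]

end Unit

theorem mem_padicBall_zero_of_sub_one_mem (hy : y - 1 ∈ padicBall p e) : y ∈ padicBall p 0 := by
  simpa using add_mem (mem_padicBall_zero hy) one_mem_padicBall

theorem inv_sub_one_mem_padicBall (he : 1 ≤ e) (hy : y - 1 ∈ padicBall p e) :
    y⁻¹ - 1 ∈ padicBall p e := by
  have hy₁ := padicBall_antitone he hy
  have hy₀ := ne_zero_of_sub_one_mem hy₁
  rw [show y⁻¹ - 1 = -(y - 1) / y by field_simp; ring]
  exact div_mem_padicBall hy₁ (neg_mem hy)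

variable {ι : Type*} {S : Finset ι} {g : ι → ℚ}

theorem prod_one_sub_sub_mem_padicBall (hg : ∀ i ∈ S, g i ∈ padicBall p e) :
    ∏ i ∈ S, (1 - g i) - (1 - ∑ i ∈ S, g i) ∈ padicBall p (e + e) := by
  classical
  induction S using Finset.induction_on with
  | empty => simp [zero_mem]
  | insert a S ha ih =>
    rw [forall_mem_insert] at hg
    rw [sum_insert ha, prod_insert ha, show (1 - g a) * ∏ i ∈ S, (1 - g i) -
        (1 - (g a + ∑ i ∈ S, g i)) =
      (1 - g a) * (∏ i ∈ S, (1 - g i) - (1 - ∑ i ∈ S, g i)) + g a * ∑ i ∈ S, g i by ring]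
    exact add_mem
      (mul_mem_padicBall_left (sub_mem one_mem_padicBall (mem_padicBall_zero hg.1)) (ih hg.2))
      (mul_mem_padicBall hg.1 (sum_mem hg.2))

theorem prod_one_sub_sub_one_mem_padicBall (hg : ∀ i ∈ S, g i ∈ padicBall p e) :
    ∏ i ∈ S, (1 - g i) - 1 ∈ padicBall p e := by
  have h := padicBall_antitone (Nat.le_add_right e e) (prod_one_sub_sub_mem_padicBall hg)
  simpa [sub_sub] using sub_mem h (sum_mem hg)

end PadicBall

section PochIntegrality

variable {p : ℕ} [hp : Fact p.Prime] {s k : ℕ} {t y : ℚ}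

theorem poch_div_factorial (y : ℚ) (k : ℕ) : poch y k / k.factorial = Ring.multichoose y k := by
  have heval : (ascPochhammer ℚ k).eval y = poch y k := by
    induction k with
    | zero => simp [poch_zero]
    | succ k ih => rw [ascPochhammer_succ_eval, poch_succ, ih]
  have h := Ring.factorial_nsmul_multichoose_eq_ascPochhammer y k
  rw [Polynomial.ascPochhammer_smeval_eq_eval, heval, nsmul_eq_mul] at h
  rw [← h]
  field_simp

theorem poch_div_factorial_mem_padicBall (hy : y ∈ padicBall p 0) (k : ℕ) :
    poch y k / k.factorial ∈ padicBall p 0 := by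
  have norm_le_one_iff (z : ℚ) : ‖(z : ℚ_[p])‖ ≤ 1 ↔ z ∈ padicBall p 0 := by
    rw [Padic.eq_padicNorm, mem_padicBall, Nat.cast_zero, neg_zero, zpow_zero]
    exact_mod_cast Iff.rfl
  let Y : ℤ_[p] := ⟨y, (norm_le_one_iff y).mpr hy⟩
  rw [poch_div_factorial, ← norm_le_one_iff]
  convert (Ring.multichoose Y k).2
  rw [show ((Ring.multichoose Y k : ℤ_[p]) : ℚ_[p]) = Ring.multichoose (y : ℚ_[p]) k from
    Ring.map_multichoose PadicInt.Coe.ringHom Y k]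
  exact Ring.map_multichoose (Rat.castHom ℚ_[p]) y k

/-- The Chu–Vandermonde identity. -/
theorem poch_add_div_factorial (x y : ℚ) (k : ℕ) :
    poch (x + y) k / k.factorial = ∑ ij ∈ antidiagonal k,
      poch x ij.1 / ij.1.factorial * (poch y ij.2 / ij.2.factorial) := by
  have hneg (z : ℚ) (n : ℕ) : Ring.multichoose z n = (-1) ^ n * Ring.choose (-z) n := by
    rw [Ring.choose_neg', Units.smul_def, Int.coe_negOnePow_natCast, zsmul_eq_mul]
    simp [← mul_assoc, ← mul_pow]
  simp only [poch_div_factorial, hneg]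
  rw [neg_add, Ring.add_choose_eq k (Commute.all (-x) (-y)), mul_sum]
  refine sum_congr rfl fun ij hij => ?_
  rw [← mem_antidiagonal.mp hij, pow_add]
  ring

theorem poch_div_factorial_mem_padicBall_one (ht : t ∈ padicBall p s) (hk : 0 < k)
    (hks : k < p ^ s) : poch t k / k.factorial ∈ padicBall p 1 := by
  obtain ⟨i, rfl⟩ := Nat.exists_eq_succ_of_ne_zero hk.ne'
  have h : poch t (i + 1) / (i + 1).factorial =
      t / ((i + 1 : ℕ) : ℚ) * (poch (t + 1) i / i.factorial) := by
    rw [poch_succ_left, Nat.factorial_succ]; push_cast; field_simp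
  rw [h]
  exact mul_mem_padicBall_right
    (div_mem_padicBall_one ht (natCast_notMem_padicBall i.succ_pos hks))
    (poch_div_factorial_mem_padicBall (add_mem (mem_padicBall_zero ht) one_mem_padicBall) i)

theorem poch_add_div_factorial_sub_mem_padicBall (hy : y ∈ padicBall p 0) (ht : t ∈ padicBall p s)
    (hks : k < p ^ s) :
    poch (y + t) k / k.factorial - poch y k / k.factorial ∈ padicBall p 1 := by
  rcases k with _ | k
  · simp [poch_zero, zero_mem]
  rw [poch_add_div_factorial, Finset.Nat.sum_antidiagonal_succ', poch_zero t, Nat.factorial_zero,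
    Nat.cast_one, div_one, mul_one, add_sub_cancel_left]
  refine sum_mem fun ij hij => ?_
  have := mem_antidiagonal.mp hij
  exact mul_mem_padicBall_left (poch_div_factorial_mem_padicBall hy _)
    (poch_div_factorial_mem_padicBall_one ht (by omega) (by omega))

theorem poch_div_factorial_mem_padicBall_one_of_add {i : ℕ} (hy : y + i ∈ padicBall p s)
    (hi : i < k) (hks : k < p ^ s) : poch y k / k.factorial ∈ padicBall p 1 := by
  have h := poch_add_div_factorial_sub_mem_padicBall (y := -(i : ℚ)) (t := y + i)
    (neg_mem (natCast_mem_padicBall i)) hy hks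
  rwa [poch_neg_natCast_of_lt hi, zero_div, sub_zero, neg_add_cancel_comm_assoc] at h

theorem poch_add_div_poch_sub_one_mem_padicBall {a τ : ℚ} (ha : ∀ i < k, a + i ≠ 0)
    (hτ : ∀ i < k, τ / (a + i) ∈ padicBall p 1) :
    poch (a + τ) k / poch a k - 1 ∈ padicBall p 1 := by
  have h := prod_one_sub_sub_one_mem_padicBall (S := range k) (g := fun i => -(τ / (a + i)))
    fun i hi => neg_mem (hτ i (mem_range.mp hi))
  convert h using 2
  simp only [poch]
  rw [← prod_div_distrib]
  refine prod_congr rfl fun i hi => ?_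
  have := ha i (mem_range.mp hi)
  field_simp
  ring

theorem poch_one_add_div_factorial_sub_one_mem_padicBall (ht : t ∈ padicBall p s)
    (hks : k < p ^ s) : poch (1 + t) k / k.factorial - 1 ∈ padicBall p 1 := by
  rw [← poch_one]
  refine poch_add_div_poch_sub_one_mem_padicBall (fun i _ => by positivity) fun i hi => ?_
  have h := natCast_notMem_padicBall i.succ_pos (show i + 1 < p ^ s by omega)
  rw [add_comm, ← Nat.cast_succ]
  exact div_mem_padicBall_one ht h

end PochIntegrality

section NewtonLattice

variable {p : ℕ} [hp : Fact p.Prime] {x : ℚ} {n e e' : ℕ} {a b f g : ℕ → ℚ}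

theorem HasNewtonExpansion.sub (hf : HasNewtonExpansion x n a f) (hg : HasNewtonExpansion x n b g) :
    HasNewtonExpansion x n (fun j => a j - b j) (fun k => f k - g k) := fun k hk => by
  simp only [hf k hk, hg k hk, sub_mul, sum_sub_distrib]

theorem HasNewtonExpansion.const_mul (c : ℚ) (hf : HasNewtonExpansion x n a f) :
    HasNewtonExpansion x n (fun j => c * a j) (fun k => c * f k) := fun k hk => by
  simp only [hf k hk, mul_sum, mul_assoc]

/-- The coefficients of a product in the basis `newtonBasis x`, in terms of the coefficients `a`
and `b` of the factors. -/
def newtonConv (x : ℚ) (n : ℕ) (a b : ℕ → ℚ) (l : ℕ) : ℚ :=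
  ∑ i ∈ range n, ∑ j ∈ range n, a i * b j * newtonMulCoeff x i j l

theorem HasNewtonExpansion.mul (hf : HasNewtonExpansion x n a f) (hg : HasNewtonExpansion x n b g) :
    HasNewtonExpansion x n (newtonConv x n a b) (fun k => f k * g k) := fun k hk => by
  simp only [hf k hk, hg k hk, newtonConv, sum_mul_sum _ (range n), sum_mul _ _ (newtonBasis x _ k)]
  rw [eq_comm, sum_comm]
  refine sum_congr rfl fun i _ => ?_
  rw [sum_comm]
  refine sum_congr rfl fun j _ => ?_
  rw [mul_mul_mul_comm, newtonBasis_mul_newtonBasis x i j hk, mul_sum]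
  exact sum_congr rfl fun l _ => by ring

theorem newtonMulCoeff_mem_padicBall (hx : x ∈ padicBall p 0) (i j l : ℕ) :
    newtonMulCoeff x i j l ∈ padicBall p 0 := by
  unfold newtonMulCoeff
  split_ifs
  · exact mul_mem_padicBall_left
      (mul_mem_padicBall_left (natCast_mem_padicBall _) (natCast_mem_padicBall _))
      (poch_div_factorial_mem_padicBall (add_mem hx (natCast_mem_padicBall l)) _)
  · exact zero_mem _

theorem newtonConv_self_mem_padicBall {l q : ℕ} (hx : x ∈ padicBall p 0) (hq : 2 * q ≤ l + 1)
    (ha : ∀ j < n, a j ∈ padicBall p e) (ha' : ∀ j < n, q ≤ j → a j ∈ padicBall p e') :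
    newtonConv x n a a l ∈ padicBall p (e + e') := by
  refine sum_mem fun i hi => sum_mem fun j hj => ?_
  rw [mem_range] at hi hj
  rcases lt_or_ge (i + j) l with hl | hl
  · simp [newtonMulCoeff, hl.not_ge, zero_mem]
  · refine mul_mem_padicBall_right ?_ (newtonMulCoeff_mem_padicBall hx i j l)
    rcases (by omega : q ≤ i ∨ q ≤ j) with h | h
    · rw [mul_comm]
      exact mul_mem_padicBall (ha j hj) (ha' i hi h)
    · exact mul_mem_padicBall (ha i hi) (ha' j hj h)

/-- On `{0, …, n - 1}` the function `f` is a combination of the `newtonBasis x j` with coefficients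
divisible by `pᵉ`. -/
def NewtonDvd (p : ℕ) [Fact p.Prime] (e : ℕ) (x : ℚ) (n : ℕ) (f : ℕ → ℚ) : Prop :=
  ∃ a : ℕ → ℚ, (∀ j < n, a j ∈ padicBall p e) ∧ HasNewtonExpansion x n a f

theorem NewtonDvd.mul (hx : x ∈ padicBall p 0) (hf : NewtonDvd p e x n f)
    (hg : NewtonDvd p e' x n g) : NewtonDvd p (e + e') x n (fun k => f k * g k) := by
  obtain ⟨a, ha, hf⟩ := hf
  obtain ⟨b, hb, hg⟩ := hg
  exact ⟨_, fun l _ => sum_mem fun i hi => sum_mem fun j hj => mul_mem_padicBall_right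
    (mul_mem_padicBall (ha i (mem_range.mp hi)) (hb j (mem_range.mp hj)))
    (newtonMulCoeff_mem_padicBall hx i j l), hf.mul hg⟩

theorem NewtonDvd.sum_mem_padicBall {s N : ℕ} (hf : NewtonDvd p e x n f) (hx : x ∈ padicBall p 0)
    (hN : N ≤ n) (hs : N + x - 1 ∈ padicBall p s) :
    ∑ k ∈ range N, (2 * k + x) * f k ∈ padicBall p (s + e) := by
  obtain ⟨a, ha, hf⟩ := hf
  have hsum : ∑ k ∈ range N, (2 * k + x) * f k =
      ∑ j ∈ range n, a j * ∑ k ∈ range N, (2 * k + x) * newtonBasis x j k := by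
    simp only [mul_sum]
    rw [sum_comm]
    refine sum_congr rfl fun k hk => ?_
    rw [hf k ((mem_range.mp hk).trans_le hN), mul_sum]
    exact sum_congr rfl fun j _ => by ring
  rw [hsum, add_comm s]
  refine sum_mem fun j hj => mul_mem_padicBall (ha j (mem_range.mp hj)) ?_
  rw [sum_range_mul_newtonBasis]
  exact mul_mem_padicBall_left (natCast_mem_padicBall _) (mul_mem_padicBall_right hs
    (poch_div_factorial_mem_padicBall (add_mem hx (natCast_mem_padicBall N)) j))

end NewtonLattice

section Remainder

variable {p : ℕ} [hp : Fact p.Prime] {s m j k : ℕ} {x y t : ℚ}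

theorem div_one_add_mem_padicBall_one {i : ℕ} (ht : t ∈ padicBall p s) (hi : i + 1 < p ^ s) :
    t / (1 + i) ∈ padicBall p 1 := by
  rw [add_comm, ← Nat.cast_succ]
  exact div_mem_padicBall_one ht (natCast_notMem_padicBall i.succ_pos hi)

theorem symmRatio_sub_mem_padicBall (hy : ∀ i < k, y + i ≠ 0)
    (ht : ∀ i < k, t / (y + i) ∈ padicBall p 1) :
    symmRatio y t k - (1 - ∑ i ∈ range k, t ^ 2 / (y + i) ^ 2) ∈ padicBall p 4 := by
  rw [symmRatio_eq_prod hy]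
  refine prod_one_sub_sub_mem_padicBall (e := 2) fun i hi => ?_
  rw [← div_pow]
  exact pow_mem_padicBall (ht i (mem_range.mp hi)) 2

theorem symmRatio_sub_one_mem_padicBall (hy : ∀ i < k, y + i ≠ 0)
    (ht : ∀ i < k, t / (y + i) ∈ padicBall p 1) : symmRatio y t k - 1 ∈ padicBall p 2 := by
  rw [symmRatio_eq_prod hy]
  refine prod_one_sub_sub_one_mem_padicBall fun i hi => ?_
  rw [← div_pow]
  exact pow_mem_padicBall (ht i (mem_range.mp hi)) 2

theorem symmRatio_one_sub_one_mem_padicBall (ht : t ∈ padicBall p s) (hj : j < p ^ s) :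
    symmRatio 1 t j - 1 ∈ padicBall p 2 :=
  symmRatio_sub_one_mem_padicBall (fun i _ => by positivity) fun i hi =>
    div_one_add_mem_padicBall_one ht (by omega)

theorem saalschutzCoeff_one_one (x : ℚ) (j : ℕ) :
    saalschutzCoeff x 1 1 j = (-1) ^ j * (poch (1 - x) j / j.factorial) := by
  rw [saalschutzCoeff, poch_one, add_sub_cancel_right]
  field_simp

theorem saalschutzCoeff_one_sub_one_add (x t : ℚ) (j : ℕ) :
    saalschutzCoeff x (1 - t) (1 + t) j = saalschutzCoeff x 1 1 j * (symmRatio 1 t j)⁻¹ := by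
  rw [saalschutzCoeff_one_one, saalschutzCoeff, symmRatio, poch_one,
    show 1 - t + (1 + t) - 1 - x = 1 - x by ring]
  field_simp

theorem saalschutzCoeff_one_one_add (x t : ℚ) (j : ℕ) :
    saalschutzCoeff x 1 (1 + t) j =
      (-1) ^ j * (poch (1 - x + t) j / j.factorial) / (poch (1 + t) j / j.factorial) := by
  rw [saalschutzCoeff, poch_one, show 1 + (1 + t) - 1 - x = 1 - x + t by ring]
  field_simp

theorem saalschutzCoeff_sub_mem_padicBall {e : ℕ}
    (hj : poch (1 - x) j / j.factorial ∈ padicBall p e) (ht : t ∈ padicBall p s)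
    (hjs : j < p ^ s) :
    saalschutzCoeff x 1 1 j - saalschutzCoeff x (1 - t) (1 + t) j ∈ padicBall p (e + 2) := by
  have hcoeff := saalschutzCoeff_one_sub_one_add x t j
  rw [saalschutzCoeff_one_one] at hcoeff ⊢
  rw [hcoeff, ← mul_one_sub, ← neg_sub _⁻¹]
  exact mul_mem_padicBall (mul_mem_padicBall_left (neg_one_pow_mem_padicBall j) hj)
    (neg_mem (inv_sub_one_mem_padicBall one_le_two (symmRatio_one_sub_one_mem_padicBall ht hjs)))

theorem saalschutzCoeff_sub_mem_padicBall_one (hx : x ∈ padicBall p 0) (ht : t ∈ padicBall p s)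
    (hjs : j < p ^ s) :
    saalschutzCoeff x 1 1 j - saalschutzCoeff x 1 (1 + t) j ∈ padicBall p 1 := by
  have hx' : 1 - x ∈ padicBall p 0 := sub_mem one_mem_padicBall hx
  have hunit := poch_one_add_div_factorial_sub_one_mem_padicBall ht hjs
  have hunit₀ := ne_zero_of_sub_one_mem hunit
  have hcoeff : saalschutzCoeff x 1 1 j - saalschutzCoeff x 1 (1 + t) j =
      (-1) ^ j * (poch (1 - x) j / j.factorial * (poch (1 + t) j / j.factorial - 1) -
        (poch (1 - x + t) j / j.factorial - poch (1 - x) j / j.factorial)) /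
          (poch (1 + t) j / j.factorial) := by
    rw [saalschutzCoeff_one_one, saalschutzCoeff_one_one_add, eq_div_iff hunit₀, sub_mul,
      div_mul_cancel₀ _ hunit₀]
    ring
  rw [hcoeff]
  refine div_mem_padicBall hunit (mul_mem_padicBall_left (neg_one_pow_mem_padicBall j) (sub_mem ?_
    (poch_add_div_factorial_sub_mem_padicBall hx' ht hjs)))
  exact mul_mem_padicBall_left (poch_div_factorial_mem_padicBall hx' j) hunit

theorem poch_one_sub_div_factorial_mem_padicBall_one (ht : t ∈ padicBall p s) (htm : x + m = t)
    (hj : p ^ s - m ≤ j) (hm : m < p ^ s) (hjs : j < p ^ s) :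
    poch (1 - x) j / j.factorial ∈ padicBall p 1 := by
  refine poch_div_factorial_mem_padicBall_one_of_add (i := p ^ s - m - 1) ?_ (by omega) hjs
  have hadd : 1 - x + (p ^ s - m - 1 : ℕ) = (p : ℚ) ^ s - t := by
    rw [← htm, Nat.cast_sub (by omega), Nat.cast_sub hm.le]; push_cast; ring
  rw [hadd]
  exact sub_mem (prime_pow_mem_padicBall s) ht

section Parameters

variable (hx : x ∈ padicBall p 0) (ht : t ∈ padicBall p s) (htm : x + m = t)
  (hsub : ∀ i : ℕ, 1 - t + i ≠ 0) (hadd : ∀ i : ℕ, 1 + t + i ≠ 0)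
include hx ht htm hsub hadd

theorem sum_sub_mul_sq_mem_padicBall (hm : m < p ^ s) :
    ∑ k ∈ range (m + 1), (2 * k + x) * ((wellPoised x 1 1 k - wellPoised x 1 (1 + t) k) *
      ((wellPoised x 1 1 k - wellPoised x (1 - t) (1 + t) k) *
        (wellPoised x 1 1 k - wellPoised x (1 - t) (1 + t) k))) ∈ padicBall p (s + 5) := by
  have hone (i : ℕ) : (1 : ℚ) + i ≠ 0 := by positivity
  have hone_exp := hasNewtonExpansion_wellPoised (x := x) hone hone (p ^ s)
  have hdvd : NewtonDvd p 1 x (p ^ s)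
      fun k => wellPoised x 1 1 k - wellPoised x 1 (1 + t) k :=
    ⟨_, fun j hj => saalschutzCoeff_sub_mem_padicBall_one hx ht hj,
      hone_exp.sub (hasNewtonExpansion_wellPoised hone hadd _)⟩
  have hdvd' : NewtonDvd p 2 x (p ^ s)
      fun k => wellPoised x 1 1 k - wellPoised x (1 - t) (1 + t) k :=
    ⟨_, fun j hj => saalschutzCoeff_sub_mem_padicBall (e := 0)
      (poch_div_factorial_mem_padicBall (sub_mem one_mem_padicBall hx) j) ht hj,
      hone_exp.sub (hasNewtonExpansion_wellPoised hsub hadd _)⟩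
  refine (hdvd.mul hx (hdvd'.mul hx hdvd')).sum_mem_padicBall hx hm ?_
  rwa [show ((m + 1 : ℕ) : ℚ) + x - 1 = t by rw [← htm]; push_cast; ring]

-- Orthogonality leaves a single coefficient of the square, and in it at least one of the two
-- factors has an index large enough to carry an additional power of `p`.
theorem sum_wellPoised_mul_sq_mem_padicBall (hx₀ : ∀ i : ℕ, x + i ≠ 0) (hm : m < p ^ s)
    (hms : 2 * p ^ s < 3 * m + 2) :
    ∑ k ∈ range (m + 1), (2 * k + x) * wellPoised x 1 (1 + t) k *
      ((wellPoised x 1 1 k - wellPoised x (1 - t) (1 + t) k) *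
        (wellPoised x 1 1 k - wellPoised x (1 - t) (1 + t) k)) ∈ padicBall p (s + 5) := by
  have hone (i : ℕ) : (1 : ℚ) + i ≠ 0 := by positivity
  have hexp := (hasNewtonExpansion_wellPoised (x := x) hone hone (p ^ s)).sub
    (hasNewtonExpansion_wellPoised hsub hadd _)
  have hsum := (hexp.mul hexp).sum_wellPoised_mul hx₀ hm
  rw [add_assoc 1 x, htm] at hsum
  rw [hsum, poch_succ, htm, show (-1) ^ m * (poch x m * t) / m.factorial =
    t * ((-1) ^ m * (poch x m / m.factorial)) by ring]
  refine mul_mem_padicBall (mul_mem_padicBall_right ht (mul_mem_padicBall_left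
    (neg_one_pow_mem_padicBall m) (poch_div_factorial_mem_padicBall hx m))) ?_
  exact newtonConv_self_mem_padicBall (e := 2) (e' := 3) (q := p ^ s - m) hx (by omega)
    (fun j hj => saalschutzCoeff_sub_mem_padicBall (e := 0)
      (poch_div_factorial_mem_padicBall (sub_mem one_mem_padicBall hx) j) ht hj)
    (fun j hj hmj => saalschutzCoeff_sub_mem_padicBall (e := 1)
      (poch_one_sub_div_factorial_mem_padicBall_one ht htm hmj hm hj) ht hj)

end Parameters

end Remainder

section Tail

theorem hasNewtonExpansion_wellPoised_add (x : ℚ) (i n : ℕ) :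
    HasNewtonExpansion (x + 2 * i) n
      (fun j => wellPoised x 1 1 i * saalschutzCoeff (x + 2 * i) (1 + i) (1 + i) j)
      (fun l => wellPoised x 1 1 (i + l)) := by
  have hi (l : ℕ) : 1 + (i : ℚ) + l ≠ 0 := by positivity
  simpa only [wellPoised_add] using (hasNewtonExpansion_wellPoised hi hi n).const_mul _

theorem wellPoised_mul_saalschutzCoeff {x : ℚ} {i j : ℕ} (hx : poch (x + i) j ≠ 0) :
    wellPoised x 1 1 i * saalschutzCoeff (x + 2 * i) (1 + i) (1 + i) j =
      (-1) ^ j * (poch (1 - x) j / j.factorial) *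
        (poch x (i + j) / (i + j).factorial / (poch (x + i) j / j.factorial)) ^ 2 := by
  rw [wellPoised_one_left, saalschutzCoeff, factorial_add, poch_add x, poch_one,
    add_sub_cancel_left, show 1 + (i : ℚ) + (1 + i) - 1 - (x + 2 * i) = 1 - x by ring]
  field_simp

variable {p : ℕ} [hp : Fact p.Prime] {s m : ℕ} {x t : ℚ}

theorem wellPoised_mul_saalschutzCoeff_mem_padicBall_two {j : ℕ} (hx : x ∈ padicBall p 0)
    (ht : t ∈ padicBall p s) (htm : x + m = t) (hj : m + 1 + j < p ^ s) :
    wellPoised x 1 1 (m + 1) *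
        saalschutzCoeff (x + 2 * (m + 1 : ℕ)) (1 + (m + 1 : ℕ)) (1 + (m + 1 : ℕ)) j ∈
      padicBall p 2 := by
  have hxm : x + (m + 1 : ℕ) = 1 + t := by rw [← htm]; push_cast; ring
  have hunit := poch_one_add_div_factorial_sub_one_mem_padicBall ht (k := j) (by omega)
  rw [← hxm] at hunit
  rw [wellPoised_mul_saalschutzCoeff (div_ne_zero_iff.mp (ne_zero_of_sub_one_mem hunit)).1]
  refine mul_mem_padicBall_left (mul_mem_padicBall_left (neg_one_pow_mem_padicBall j)
    (poch_div_factorial_mem_padicBall (sub_mem one_mem_padicBall hx) j)) ?_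
  have hdvd : poch x (m + 1 + j) / (m + 1 + j).factorial ∈ padicBall p 1 :=
    poch_div_factorial_mem_padicBall_one_of_add (htm.symm ▸ ht) (by omega) hj
  exact pow_mem_padicBall (div_mem_padicBall hunit hdvd) 2

theorem sum_tail_mem_padicBall {N : ℕ} (hx : x ∈ padicBall p 0) (ht : t ∈ padicBall p s)
    (htm : x + m = t) (hN : m + 1 + N = p ^ s) :
    ∑ l ∈ range N, (2 * (m + 1 + l : ℕ) + x) * wellPoised x 1 1 (m + 1 + l) ^ 3 ∈
      padicBall p (s + 5) := by
  have hX : x + 2 * (m + 1 : ℕ) ∈ padicBall p 0 :=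
    add_mem hx (mod_cast natCast_mem_padicBall (2 * (m + 1)))
  have hdvd : NewtonDvd p 2 (x + 2 * (m + 1 : ℕ)) N fun l => wellPoised x 1 1 (m + 1 + l) :=
    ⟨_, fun j hj => wellPoised_mul_saalschutzCoeff_mem_padicBall_two hx ht htm (by omega),
      hasNewtonExpansion_wellPoised_add x (m + 1) N⟩
  have hNt : (N : ℚ) + (x + 2 * (m + 1 : ℕ)) - 1 = (p : ℚ) ^ s + t := by
    rw [← htm, ← Nat.cast_pow, ← hN]; push_cast; ring
  have hsum := (hdvd.mul hX (hdvd.mul hX hdvd)).sum_mem_padicBall hX le_rfl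
    (hNt ▸ add_mem (prime_pow_mem_padicBall s) ht)
  refine padicBall_antitone (by omega : s + 5 ≤ s + (2 + (2 + 2))) ?_
  convert hsum using 1
  refine sum_congr rfl fun l _ => ?_
  push_cast
  ring

end Tail

section WhippleWeight

theorem whippleWeight_add {x : ℚ} {k : ℕ} (hx : poch (2 * x) k ≠ 0) (j : ℕ) :
    whippleWeight x (k + j) k =
      (-1) ^ k * (poch x k / poch (-((k + j : ℕ) : ℚ)) k) * (poch x k / k.factorial) ^ 2 *
        (poch (1 - x) k / k.factorial * (poch (2 * x + k) j / j.factorial)) := by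
  have hfact : ((k + j).factorial : ℚ) =
      j.factorial * ((-1) ^ k * poch (-((k + j : ℕ) : ℚ)) k) := by
    rw [← poch_one_sub_sub, add_comm k, factorial_add]
    congr 2
    push_cast; ring
  have hneg : poch (-((k + j : ℕ) : ℚ)) k ≠ 0 := by
    intro h
    rw [h, mul_zero, mul_zero] at hfact
    exact (k + j).factorial_ne_zero (mod_cast hfact)
  have hsign : ((-1 : ℚ) ^ k) ^ 2 = 1 := by
    rw [pow_right_comm, neg_one_sq, one_pow]
  rw [whippleWeight, poch_one, hfact, poch_add]
  generalize poch (-((k + j : ℕ) : ℚ)) k = G at hneg ⊢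
  generalize poch (2 * x) k = H at hx ⊢
  field_simp
  rw [hsign, mul_one]

variable {p : ℕ} [hp : Fact p.Prime] {s m k : ℕ} {x t : ℚ}
  (ht : t ∈ padicBall p s) (htm : x + m = t) (hm : m < p ^ s) (hk : k ≤ m)
include ht htm hm hk

theorem poch_div_poch_neg_mem_padicBall : poch x k / poch (-(m : ℚ)) k ∈ padicBall p 0 := by
  have hcast {i : ℕ} (hi : i < k) : -(m : ℚ) + i = -(m - i : ℕ) := by
    rw [Nat.cast_sub (by omega)]; ring
  have hnot {i : ℕ} (hi : i < k) : -(m : ℚ) + i ∉ padicBall p s := by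
    rw [hcast hi, neg_mem_iff]
    exact natCast_notMem_padicBall (by omega) (by omega)
  have hunit := poch_add_div_poch_sub_one_mem_padicBall (a := -(m : ℚ)) (τ := t)
    (fun i hi h => hnot hi (h ▸ zero_mem _)) fun i hi => div_mem_padicBall_one ht (hnot hi)
  rw [show -(m : ℚ) + t = x by rw [← htm]; ring] at hunit
  exact mem_padicBall_zero_of_sub_one_mem hunit

theorem whippleWeight_mem_padicBall_one (hx : x ∈ padicBall p 0) (hx₂ : poch (2 * x) k ≠ 0)
    (hms : 2 * p ^ s < 3 * m + 2) : whippleWeight x m k ∈ padicBall p 1 := by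
  have hratio := poch_div_poch_neg_mem_padicBall ht htm hm hk
  obtain ⟨j, rfl⟩ := Nat.exists_eq_add_of_le hk
  rw [whippleWeight_add hx₂]
  refine mul_mem_padicBall_left (mul_mem_padicBall_left
    (mul_mem_padicBall_left (neg_one_pow_mem_padicBall k) hratio)
    (pow_mem_padicBall (poch_div_factorial_mem_padicBall hx k) 2)) ?_
  rcases le_or_gt (p ^ s - (k + j)) k with h | h
  · refine mul_mem_padicBall_right
      (poch_one_sub_div_factorial_mem_padicBall_one ht htm h hm (by omega))
      (poch_div_factorial_mem_padicBall (add_mem ?_ (natCast_mem_padicBall k)) j)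
    exact mul_mem_padicBall_left (mod_cast natCast_mem_padicBall 2) hx
  · refine mul_mem_padicBall_left
      (poch_div_factorial_mem_padicBall (sub_mem one_mem_padicBall hx) k)
      (poch_div_factorial_mem_padicBall_one_of_add (s := s) (i := k + 2 * j - p ^ s) ?_
        (by omega) (by omega))
    have hadd : 2 * x + k + (k + 2 * j - p ^ s : ℕ) = t + t - (p : ℚ) ^ s := by
      rw [← htm, Nat.cast_sub (by omega)]; push_cast; ring
    rw [hadd]
    exact sub_mem (add_mem ht ht) (prime_pow_mem_padicBall s)

theorem div_add_mem_padicBall_one {i : ℕ} (hi : i < k) : t / (x + i) ∈ padicBall p 1 := by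
  refine div_mem_padicBall_one ht fun h => ?_
  refine natCast_notMem_padicBall (by omega : 0 < m - i) (by omega : m - i < p ^ s) ?_
  rw [Nat.cast_sub (by omega), show (m : ℚ) - i = t - (x + i) by rw [← htm]; ring]
  exact sub_mem ht h

end WhippleWeight

section Congruence

theorem symmRatio_zero {y : ℚ} {k : ℕ} (hy : poch y k ≠ 0) : symmRatio y 0 k = 1 := by
  rw [symmRatio, add_zero, sub_zero]
  field_simp

variable {p : ℕ} [hp : Fact p.Prime] {s m : ℕ} {x t : ℚ}

theorem mul_two_sub_inv_sub_mem_padicBall {P Q A B : ℚ} {e : ℕ} (he : 1 ≤ e)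
    (hP : P - (1 - A) ∈ padicBall p (e + e)) (hQ : Q - (1 - B) ∈ padicBall p (e + e))
    (hP₁ : P - 1 ∈ padicBall p e) (hQ₁ : Q - 1 ∈ padicBall p e) :
    P * (2 - Q⁻¹) - (1 - (A + B)) ∈ padicBall p (e + e) := by
  have hunit := padicBall_antitone he hQ₁
  have hQ₀ := ne_zero_of_sub_one_mem hunit
  have hdecomp : P * (2 - Q⁻¹) - (1 - (A + B)) = (P - (1 - A)) + (Q - (1 - B)) +
      (P - 1) * (Q - 1) - P * ((Q - 1) * (Q - 1) / Q) := by
    field_simp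
    ring
  rw [hdecomp]
  exact sub_mem (add_mem (add_mem hP hQ) (mul_mem_padicBall hP₁ hQ₁))
    (mul_mem_padicBall_left (mem_padicBall_zero_of_sub_one_mem hP₁)
      (div_mem_padicBall hunit (mul_mem_padicBall hQ₁ hQ₁)))

theorem symmRatio_mul_two_sub_inv_mem_padicBall {k : ℕ} (hx : ∀ i : ℕ, x + i ≠ 0)
    (ht : t ∈ padicBall p s) (htm : x + m = t) (hm : m < p ^ s) (hk : k ≤ m) :
    symmRatio x t k * (2 - (symmRatio 1 t k)⁻¹) -
      (1 - ∑ i ∈ range k, (t ^ 2 / (x + i) ^ 2 + t ^ 2 / (1 + i) ^ 2)) ∈ padicBall p 4 := by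
  have hx' (i : ℕ) (_ : i < k) : x + i ≠ 0 := hx i
  have hdiv (i : ℕ) (hi : i < k) : t / (x + i) ∈ padicBall p 1 :=
    div_add_mem_padicBall_one ht htm hm hk hi
  have hone (i : ℕ) (_ : i < k) : (1 : ℚ) + i ≠ 0 := by positivity
  have hdiv' (i : ℕ) (hi : i < k) : t / (1 + i) ∈ padicBall p 1 :=
    div_one_add_mem_padicBall_one ht (by omega)
  rw [sum_add_distrib]
  exact mul_two_sub_inv_sub_mem_padicBall (e := 2) one_le_two (symmRatio_sub_mem_padicBall hx' hdiv)
    (symmRatio_sub_mem_padicBall hone hdiv') (symmRatio_sub_one_mem_padicBall hx' hdiv)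
    (symmRatio_sub_one_mem_padicBall hone hdiv')

theorem sum_wellPoised_pow_three (hx : ∀ z : ℤ, 2 * x + z ≠ 0) (htm : x + m = t)
    (hsub : ∀ i : ℕ, 1 - t + i ≠ 0) (hadd : ∀ i : ℕ, 1 + t + i ≠ 0) :
    ∑ k ∈ range (m + 1), (2 * k + x) * wellPoised x 1 1 k ^ 3 =
      ∑ k ∈ range (m + 1), (2 * k + x) *
        (wellPoised x 1 1 k * (wellPoised x 1 1 k - wellPoised x (1 - t) (1 + t) k) ^ 2) +
      t * ∑ k ∈ range (m + 1), whippleWeight x m k *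
        (symmRatio x t k * (2 - (symmRatio 1 t k)⁻¹)) := by
  have hone (i : ℕ) : (1 : ℚ) + i ≠ 0 := by positivity
  have hwhipple₀ := sum_wellPoised_mul_wellPoised_one_sub_one_add (b := 0) hx htm
    (by simpa using hone) (by simpa using hone)
  have hwhipple := sum_wellPoised_mul_wellPoised_one_sub_one_add hx htm hsub hadd
  simp only [symmRatio_zero (poch_ne_zero fun i _ => hone i), div_one, sub_zero, add_zero]
    at hwhipple₀
  have hsplit : t * ∑ k ∈ range (m + 1), whippleWeight x m k *
        (symmRatio x t k * (2 - (symmRatio 1 t k)⁻¹)) =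
      2 * (t * ∑ k ∈ range (m + 1), whippleWeight x m k * symmRatio x t k) -
        t * ∑ k ∈ range (m + 1), whippleWeight x m k * (symmRatio x t k / symmRatio 1 t k) := by
    simp only [mul_sum, ← sum_sub_distrib]
    exact sum_congr rfl fun k _ => by ring
  rw [hsplit, ← hwhipple₀, ← hwhipple, mul_sum, ← sum_sub_distrib, ← sum_add_distrib]
  exact sum_congr rfl fun k _ => by ring

variable (hx : ∀ z : ℤ, 2 * x + z ≠ 0) (hx₀ : x ∈ padicBall p 0) (ht : t ∈ padicBall p s)
  (htm : x + m = t) (hm : m < p ^ s) (hms : 2 * p ^ s < 3 * m + 2)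
include hx hx₀ ht htm hm hms

theorem sum_wellPoised_pow_three_sub_mem_padicBall :
    ∑ k ∈ range (m + 1), (2 * k + x) * wellPoised x 1 1 k ^ 3 -
      t * ∑ k ∈ range (m + 1), whippleWeight x m k *
        (1 - ∑ i ∈ range k, (t ^ 2 / (x + i) ^ 2 + t ^ 2 / (1 + i) ^ 2)) ∈
      padicBall p (s + 5) := by
  have hxz (z : ℤ) : x + z ≠ 0 := fun h => hx (2 * z) (by push_cast; linear_combination 2 * h)
  have hxn (i : ℕ) : x + i ≠ 0 := mod_cast hxz i
  have hsub (i : ℕ) : 1 - t + i ≠ 0 := fun h => hxz (m - 1 - i) (by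
    push_cast; linear_combination htm - h)
  have hadd (i : ℕ) : 1 + t + i ≠ 0 := fun h => hxz (m + 1 + i) (by
    push_cast; linear_combination htm + h)
  have hremainder : ∑ k ∈ range (m + 1), (2 * k + x) * (wellPoised x 1 1 k *
      (wellPoised x 1 1 k - wellPoised x (1 - t) (1 + t) k) ^ 2) ∈ padicBall p (s + 5) := by
    convert add_mem (sum_sub_mul_sq_mem_padicBall hx₀ ht htm hsub hadd hm)
      (sum_wellPoised_mul_sq_mem_padicBall hx₀ ht htm hsub hadd hxn hm hms) using 1
    rw [← sum_add_distrib]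
    exact sum_congr rfl fun k _ => by ring
  rw [sum_wellPoised_pow_three hx htm hsub hadd, add_sub_assoc, ← mul_sub, ← sum_sub_distrib]
  refine add_mem hremainder (mul_mem_padicBall ht (sum_mem fun k hk => ?_))
  have hkm : k ≤ m := Nat.lt_succ_iff.mp (mem_range.mp hk)
  have hx₂ : poch (2 * x) k ≠ 0 := poch_ne_zero fun i _ => mod_cast hx i
  rw [← mul_sub]
  exact mul_mem_padicBall (f := 4) (whippleWeight_mem_padicBall_one ht htm hm hkm hx₀ hx₂ hms)
    (symmRatio_mul_two_sub_inv_mem_padicBall hxn ht htm hm hkm)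

theorem sum_wellPoised_pow_three_sub_mem_padicBall_of_eq_or {M : ℕ}
    (hM : M = m ∨ M = p ^ s - 1) :
    ∑ k ∈ range (M + 1), (2 * k + x) * wellPoised x 1 1 k ^ 3 -
      t * ∑ k ∈ range (m + 1), whippleWeight x m k *
        (1 - ∑ i ∈ range k, (t ^ 2 / (x + i) ^ 2 + t ^ 2 / (1 + i) ^ 2)) ∈
      padicBall p (s + 5) := by
  have hmain := sum_wellPoised_pow_three_sub_mem_padicBall hx hx₀ ht htm hm hms
  rcases hM with rfl | hM
  · exact hmain
  · obtain ⟨N, hN⟩ := Nat.exists_eq_add_of_lt hm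
    rw [show M + 1 = m + 1 + N by omega, sum_range_add, add_sub_right_comm]
    exact add_mem hmain (sum_tail_mem_padicBall hx₀ ht htm (by omega))

end Congruence

section Specialization

variable {p s d m : ℕ} {r : ℤ} {D : ℚ}

theorem sum_Icc_one_div_sq_add_one_div_sq (hD : D ≠ 0) (x t : ℚ) (k : ℕ) :
    (D * t) ^ 2 * ∑ j ∈ Icc 1 k, (1 / (D * j) ^ 2 + 1 / (D * j - D + D * x) ^ 2) =
      ∑ i ∈ range k, (t ^ 2 / (x + i) ^ 2 + t ^ 2 / (1 + i) ^ 2) := by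
  rw [← Ico_add_one_right_eq_Icc, sum_Ico_eq_sum_range, Nat.add_sub_cancel, mul_sum]
  refine sum_congr rfl fun i _ => ?_
  have hshift : D * ((1 + i : ℕ) : ℚ) - D + D * x = D * (x + i) := by push_cast; ring
  rw [hshift, mul_add, mul_one_div, mul_one_div, mul_pow, mul_pow, mul_pow,
    mul_div_mul_left _ _ (pow_ne_zero 2 hD), mul_div_mul_left _ _ (pow_ne_zero 2 hD), add_comm]
  push_cast
  rfl

theorem mul_poch_pow_six_div (hD : D ≠ 0) (r : ℚ) (k : ℕ) :
    (2 * D * k + r) * poch (r / D) k ^ 6 / (k.factorial : ℚ) ^ 6 =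
      D * ((2 * k + r / D) * wellPoised (r / D) 1 1 k ^ 3) := by
  rw [wellPoised_one_left, poch_one, add_sub_cancel_left]
  field_simp

theorem mul_sum_whippleWeight (hD : D ≠ 0) (r t : ℚ) (m : ℕ) :
    D * (t * ∑ k ∈ range (m + 1), whippleWeight (r / D) m k *
        (1 - ∑ i ∈ range k, (t ^ 2 / (r / D + i) ^ 2 + t ^ 2 / (1 + i) ^ 2))) =
      (poch (2 * r / D) m / poch 1 m) * ∑ k ∈ range (m + 1),
        (poch (r / D) k ^ 3 * poch (1 - r / D) k / ((k.factorial : ℚ) ^ 3 * poch (2 * r / D) k)) *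
          (D * t - (D * t) ^ 3 * ∑ j ∈ Icc 1 k, (1 / (D * j) ^ 2 + 1 / (D * j - D + r) ^ 2)) := by
  rw [mul_sum, mul_sum, mul_sum]
  refine sum_congr rfl fun k _ => ?_
  rw [← sum_Icc_one_div_sq_add_one_div_sq hD, mul_div_cancel₀ _ hD, whippleWeight,
    mul_div_assoc 2 r D]
  ring

theorem div_natCast_mem_padicBall [hp : Fact p.Prime] {e : ℕ} {y : ℚ} (hgcd : p.Coprime d)
    (hy : y ∈ padicBall p e) : y / d ∈ padicBall p e := by
  have hnorm : padicNorm p d = 1 :=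
    (padicNorm.nat_eq_one_iff d).mpr (hp.out.coprime_iff_not_dvd.mp hgcd)
  rwa [mem_padicBall, padicNorm.div, hnorm, div_one]

theorem two_mul_div_add_intCast_ne_zero (hd : d ≠ 0) (hr : ¬ (d : ℤ) ∣ 2 * r) (z : ℤ) :
    2 * ((r : ℚ) / d) + z ≠ 0 := fun h => hr ⟨-z, by
  have hd' : (d : ℚ) ≠ 0 := mod_cast hd
  field_simp at h
  have h' : 2 * r + d * z = 0 := by exact_mod_cast h
  linear_combination h'⟩

theorem div_add_natCast_eq_sub_one_mul_pow_div (hd : d ≠ 0)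
    (hm : (m : ℤ) * d = d * p ^ s - p ^ s - r) :
    (r : ℚ) / d + m = (d - 1) * p ^ s / d := by
  have hd' : (d : ℚ) ≠ 0 := mod_cast hd
  have hm' : (m : ℚ) * d = d * p ^ s - p ^ s - r := mod_cast hm
  field_simp
  linear_combination hm'

theorem lt_pow_of_mul_eq (hd : d ≠ 0) (hm : (m : ℤ) * d = d * p ^ s - p ^ s - r)
    (hr : -(p : ℤ) ^ s < r) : m < p ^ s := by
  have hd' : (0 : ℤ) < d := by omega
  have h : (d : ℤ) * m < d * p ^ s := by linarith
  exact_mod_cast lt_of_mul_lt_mul_left h hd'.le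

theorem two_mul_pow_lt_of_mul_eq (hd : d ≠ 0)
    (hm : (m : ℤ) * d = d * p ^ s - p ^ s - r) (hr : 3 * r < (d - 3) * (p : ℤ) ^ s + 2 * d) :
    2 * p ^ s < 3 * m + 2 := by
  have hd' : (0 : ℤ) < d := by omega
  have h : (d : ℤ) * (2 * p ^ s) < d * (3 * m + 2) := by linarith
  exact_mod_cast lt_of_mul_lt_mul_left h hd'.le

end Specialization

theorem stmt15_general (d s : ℕ) (p : ℕ) (hp : p.Prime) (hgcd : Nat.gcd p d = 1) (r : ℤ)
    (hr : ¬ (d : ℤ) ∣ 2 * r) (hrp : -(p : ℤ) ^ s < r)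
    (hrd : 3 * r < (d - 3) * (p : ℤ) ^ s + 2 * d)
    (m₀ : ℕ) (hm₀ : (m₀ : ℤ) * d = (d : ℤ) * p ^ s - p ^ s - r)
    (m : ℕ) (hm : m = m₀ ∨ m = p ^ s - 1) :
    pcong p (s + 5)
      (∑ k ∈ Finset.range (m + 1),
        ((2 * d * k : ℚ) + r) * poch ((r : ℚ) / d) k ^ 6 / (k.factorial : ℚ) ^ 6)
      ((poch (2 * (r : ℚ) / d) m₀ / poch 1 m₀) *
        ∑ k ∈ Finset.range (m₀ + 1),
          (poch ((r : ℚ) / d) k ^ 3 * poch (1 - (r : ℚ) / d) k /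
            ((k.factorial : ℚ) ^ 3 * poch (2 * (r : ℚ) / d) k)) *
          (((d : ℚ) - 1) * (p : ℚ) ^ s - ((d : ℚ) - 1) ^ 3 * (p : ℚ) ^ (3 * s) *
            ∑ j ∈ Finset.Icc 1 k,
              (1 / ((d : ℚ) * j) ^ 2 + 1 / ((d : ℚ) * j - d + r) ^ 2))) := by
  have : Fact p.Prime := ⟨hp⟩
  have hd : d ≠ 0 := fun h => hp.ne_one (by simpa [h] using hgcd)
  have hdq : (d : ℚ) ≠ 0 := mod_cast hd
  have ht : (d - 1 : ℚ) * p ^ s / d ∈ padicBall p s := div_natCast_mem_padicBall hgcd <|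
    mul_mem_padicBall_left (sub_mem (natCast_mem_padicBall d) one_mem_padicBall)
      (prime_pow_mem_padicBall s)
  have hmain := mul_mem_padicBall_left (natCast_mem_padicBall d)
    (sum_wellPoised_pow_three_sub_mem_padicBall_of_eq_or
      (two_mul_div_add_intCast_ne_zero hd hr)
      (div_natCast_mem_padicBall hgcd (intCast_mem_padicBall r)) ht
      (div_add_natCast_eq_sub_one_mul_pow_div hd hm₀) (lt_pow_of_mul_eq hd hm₀ hrp)
      (two_mul_pow_lt_of_mul_eq hd hm₀ hrd) hm)
  have hcube : ((d - 1 : ℚ) * p ^ s) ^ 3 = (d - 1) ^ 3 * p ^ (3 * s) := by ring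
  rw [mul_sub, mul_sum_whippleWeight hdq, mul_sum, mul_div_cancel₀ _ hdq, hcube] at hmain
  simp only [← mul_poch_pow_six_div hdq] at hmain
  exact pcong_of_sub_mem_padicBall hmain

theorem not_natCast_dvd_two_mul {d : ℕ} {r : ℤ} (hd : 3 ≤ d) (hr : r = 1 ∨ r = -1) :
    ¬ (d : ℤ) ∣ 2 * r := by
  rw [← Int.dvd_natAbs, Int.natCast_dvd_natCast,
    show (2 * r).natAbs = 2 by rcases hr with rfl | rfl <;> rfl]
  exact Nat.not_dvd_of_pos_of_lt two_pos hd

theorem stmt15 (d s : ℕ) (hd : 0 < d) (hs : 0 < s) (p : ℕ) (hp : p.Prime) (hodd : Odd p)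
    (r : ℤ) (hr : r = 1 ∨ r = -1)
    (hrd : (d : ℤ) ≤ (p : ℤ) ^ s + r) (hd3 : 3 ≤ d)
    (hgcd : Nat.gcd p d = 1) (hmod : ((p : ℤ) ^ s) ≡ -r [ZMOD (d : ℤ)])
    (m₀ : ℕ) (hm₀ : (m₀ : ℤ) * d = (d : ℤ) * p ^ s - p ^ s - r)
    (m : ℕ) (hm : m = m₀ ∨ m = p ^ s - 1) :
    pcong p (s + 5)
      (∑ k ∈ Finset.range (m + 1),
        ((2 * d * k : ℚ) + r) * poch ((r : ℚ) / d) k ^ 6 / (k.factorial : ℚ) ^ 6)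
      ((poch (2 * (r : ℚ) / d) m₀ / poch 1 m₀) *
        ∑ k ∈ Finset.range (m₀ + 1),
          (poch ((r : ℚ) / d) k ^ 3 * poch (1 - (r : ℚ) / d) k /
            ((k.factorial : ℚ) ^ 3 * poch (2 * (r : ℚ) / d) k)) *
          (((d : ℚ) - 1) * (p : ℚ) ^ s - ((d : ℚ) - 1) ^ 3 * (p : ℚ) ^ (3 * s) *
            ∑ j ∈ Finset.Icc 1 k,
              (1 / ((d : ℚ) * j) ^ 2 + 1 / ((d : ℚ) * j - d + r) ^ 2))) := by
  have hpow : (1 : ℤ) < (p : ℤ) ^ s := one_lt_pow₀ (mod_cast hp.one_lt) hs.ne'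
  have hprod : 0 ≤ ((d : ℤ) - 3) * (p : ℤ) ^ s := mul_nonneg (by omega) (by omega)
  exact stmt15_general d s p hp hgcd r (not_natCast_dvd_two_mul hd3 hr) (by omega) (by omega)
    m₀ hm₀ m hm
end

section
/- Let n be a positive integer with n ≡ 3 (mod 4) and let M = (n-1)/2 or M = n-1. Then, modulo [n]*Phi_n(q)^4, sum_{k=0}^{M} (-1)^k [4k+1] ((q;q^2)_k^4 (q^2;q^4)_k / ((q^2;q^2)_k^4 (q^4;q^4)_k)) q^k ≡ - [n]^3 * (q^{1-n} / (1+q)^2) * ((q^4;q^4)_{(n-3)/4}^2 / (q^6;q^4)_{(n-3)/4}^2). -/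
open Finset

/-- The generator `q` of the field `ℚ(q)` of rational functions. -/
noncomputable def q : RatFunc ℚ := RatFunc.X

/-- The `q`-integer `[r] = (1 - q^r)/(1 - q)`. -/
noncomputable def qint (r : ℤ) : RatFunc ℚ := (1 - q ^ r) / (1 - q)

/-- The `q`-shifted factorial `(x; b)_m = (1-x)(1-xb)⋯(1-x b^(m-1))`. -/
noncomputable def qpoch (x b : RatFunc ℚ) (m : ℕ) : RatFunc ℚ :=
  ∏ i ∈ Finset.range m, (1 - x * b ^ i)

/-- `f ≡ g (mod P)`: `f - g = P * (r/s)` with `s` coprime to `P`. -/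
def qcong (f g : RatFunc ℚ) (P : Polynomial ℚ) : Prop :=
  ∃ r s : Polynomial ℚ, IsCoprime s P ∧
    f - g = algebraMap (Polynomial ℚ) (RatFunc ℚ) P *
      (algebraMap (Polynomial ℚ) (RatFunc ℚ) r / algebraMap (Polynomial ℚ) (RatFunc ℚ) s)

/-!
Deform the summand by two parameters `x`, `y` that give the sum back at `x = y = 1`. A WZ pair
telescopes a relation between the values at `x q²` and `x⁻¹ q²`, so at `x = q ^ n` the deformed sum
is a product; it vanishes at `(q ^ n, 1)`, and at `(q ^ n, q ^ n)` it is, up to sign and modulo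
`Φ_n ^ 5`, the right-hand side. The second difference of the sum over `x, y ∈ {1, q ^ n}` is
`(1 - q ^ n) ^ 4` times a weighted sum of squares. At a primitive `n`-th root of unity the terms of
the latter cancel in pairs under `k ↦ (n - 1) / 2 - k`, because the summand is antisymmetric and its
logarithmic derivative in the parameters symmetric. Hence the congruence modulo `Φ_n ^ 5`.

At a primitive `d`-th root of unity with `d ∣ n`, the sum splits into blocks of length `d` (and half
of one), each zero by the same antisymmetry, and counting cyclotomic factors shows that the
right-hand side vanishes too. As `[n] = ∏ Φ_d` over the divisors `d ≠ 1` of `n`, these congruences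
combine.
-/

section TruncatedSum

variable {K : Type*} [Field K]

/-- The factor `(1 - x a)(1 - a / x)`, invariant under `x ↦ x⁻¹`, out of which the
very-well-poised summands are built. At `a = 1` it equals `-(1 - x)² / x`. -/
def pairFactor (x a : K) : K := (1 - x * a) * (1 - x⁻¹ * a)

/-- The quotient `(x p, p / x; p²)_k / (x p², p² / x; p²)_k`. -/
def pairRatio (p x : K) (k : ℕ) : K :=
  ∏ i ∈ range k, pairFactor x (p ^ (2 * i + 1)) / pairFactor x (p ^ (2 * i + 2))

/-- The coefficient `(-p)^k (p²; p⁴)_k / (p⁴; p⁴)_k`. -/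
def altCoeff (p : K) (k : ℕ) : K :=
  ∏ i ∈ range k, -p * ((1 - p ^ (4 * i + 2)) / (1 - p ^ (4 * i + 4)))

/-- The sum of the theorem (times `1 - p`), deformed by two parameters `x` and `y`;
it is recovered at `x = y = 1`. -/
def truncSum (p x y : K) (N : ℕ) : K :=
  ∑ k ∈ range (N + 1), altCoeff p k * (1 - p ^ (4 * k + 1)) * pairRatio p y k * pairRatio p x k

lemma pairFactor_inv_left (x a : K) : pairFactor x⁻¹ a = pairFactor x a := by
  rw [pairFactor, pairFactor, inv_inv, mul_comm]

lemma pairFactor_eq_one_sub_sq_add {x : K} (hx : x ≠ 0) (a : K) :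
    pairFactor x a = (1 - a) ^ 2 + pairFactor x 1 * a := by
  simp only [pairFactor]
  field_simp
  ring

lemma pairFactor_inv_right (x : K) {a : K} (ha : a ≠ 0) (hx : x ≠ 0) :
    pairFactor x a⁻¹ = pairFactor x a / a ^ 2 := by
  simp only [pairFactor]
  field_simp
  ring

lemma pairRatio_zero (p x : K) : pairRatio p x 0 = 1 := prod_range_zero _

lemma pairRatio_succ (p x : K) (k : ℕ) : pairRatio p x (k + 1) =
    pairRatio p x k * (pairFactor x (p ^ (2 * k + 1)) / pairFactor x (p ^ (2 * k + 2))) :=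
  prod_range_succ _ _

lemma altCoeff_succ (p : K) (k : ℕ) : altCoeff p (k + 1) =
    altCoeff p k * (-p * ((1 - p ^ (4 * k + 2)) / (1 - p ^ (4 * k + 4)))) :=
  prod_range_succ _ _

lemma pairRatio_inv (p x : K) (k : ℕ) : pairRatio p x⁻¹ k = pairRatio p x k := by
  simp only [pairRatio, pairFactor_inv_left]

lemma truncSum_inv (p x y : K) (N : ℕ) : truncSum p x⁻¹ y N = truncSum p x y N := by
  simp only [truncSum, pairRatio_inv]

lemma pairRatio_mul_sq_succ {p x : K} (hp : p ≠ 0) (hx : x ≠ 0) (hx1 : x ≠ 1)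
    (hpole : ∀ i : ℕ, pairFactor x (p ^ (2 * i + 2)) ≠ 0) (k : ℕ) :
    pairRatio p (x * p ^ 2) (k + 1) = pairRatio p x k * ((1 - x * p ^ 2) / (p * (1 - x)) *
      ((1 - x * p ^ (2 * k + 1)) * (1 - x * p ^ (2 * k + 3)) /
        ((1 - x * p ^ (2 * k + 2)) * (1 - x * p ^ (2 * k + 4))))) := by
  have hsub : 1 - x ≠ 0 := sub_ne_zero.2 hx1.symm
  have hden (i : ℕ) : 1 - x * p ^ (2 * i + 2) ≠ 0 := left_ne_zero_of_mul (hpole i)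
  have hden' (i : ℕ) : 1 - x⁻¹ * p ^ (2 * i + 2) ≠ 0 := right_ne_zero_of_mul (hpole i)
  have hshift (i : ℕ) : pairFactor (x * p ^ 2) (p ^ (i + 2)) =
      (1 - x * p ^ (i + 4)) * (1 - x⁻¹ * p ^ i) := by
    simp only [pairFactor]
    field_simp
    ring
  induction k with
  | zero =>
    have hsub' : x - 1 ≠ 0 := sub_ne_zero.2 hx1
    have h2 := hden 0
    have h4 := hden 1
    simp only [pairRatio_succ, pairRatio_zero, mul_zero, zero_add, pow_one, mul_one, one_mul,
      hshift 0, pow_zero] at *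
    simp only [pairFactor]
    field_simp
    ring
  | succ k ih =>
    have h2 := hden k
    have h4 := hden (k + 1)
    have h6 := hden (k + 2)
    have h2' := hden' k
    rw [pairRatio_succ, ih, pairRatio_succ, show 2 * (k + 1) + 1 = 2 * k + 1 + 2 by ring,
      show 2 * (k + 1) + 2 = 2 * k + 2 + 2 by ring, hshift, hshift]
    simp only [pairFactor, show 2 * (k + 1) = 2 * k + 2 by ring,
      show 2 * (k + 2) = 2 * k + 4 by ring, add_assoc, Nat.reduceAdd] at *
    generalize 1 - x⁻¹ * p ^ (2 * k + 2) = a2 at *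
    generalize 1 - x * p ^ (2 * k + 2) = b2 at *
    generalize 1 - x * p ^ (2 * k + 4) = b4 at *
    generalize 1 - x * p ^ (2 * k + 6) = b6 at *
    field_simp

lemma wz_identity {x y : K} (hx : x ≠ 0) (hy : y ≠ 0) (p P : K)
    (h2 : pairFactor x (p ^ 2 * P) ≠ 0) (h4 : pairFactor x (p ^ 4 * P) ≠ 0) :
    (1 - p ^ 5 * P ^ 2) *
      (pairFactor y (p * x) * ((1 - x * (p * P)) * (1 - x * (p ^ 3 * P)) /
          ((1 - x * (p ^ 2 * P)) * (1 - x * (p ^ 4 * P)))) -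
        x ^ 2 * pairFactor y (p * x⁻¹) * ((1 - x⁻¹ * (p * P)) * (1 - x⁻¹ * (p ^ 3 * P)) /
          ((1 - x⁻¹ * (p ^ 2 * P)) * (1 - x⁻¹ * (p ^ 4 * P))))) =
    (1 - p) * (1 - x ^ 2) *
      (p * (1 - p ^ 6 * P ^ 2) * (pairFactor x (p * P) * pairFactor y (p ^ 3 * P)) /
          (pairFactor x (p ^ 2 * P) * pairFactor x (p ^ 4 * P)) +
        (1 - p ^ 4 * P ^ 2) * pairFactor y (p ^ 2 * P) / pairFactor x (p ^ 2 * P)) := by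
  have hcleared : (1 - p ^ 5 * P ^ 2) *
      (x ^ 2 * pairFactor y (p * x⁻¹) * ((1 - x⁻¹ * (p * P)) * (1 - x⁻¹ * (p ^ 3 * P))) *
          ((1 - x * (p ^ 2 * P)) * (1 - x * (p ^ 4 * P))) -
        pairFactor y (p * x) * ((1 - x * (p * P)) * (1 - x * (p ^ 3 * P))) *
          ((1 - x⁻¹ * (p ^ 2 * P)) * (1 - x⁻¹ * (p ^ 4 * P)))) =
      (1 - p) * (1 - x ^ 2) *
        (-p * (1 - p ^ 6 * P ^ 2) * pairFactor x (p * P) * pairFactor y (p ^ 3 * P) -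
          (1 - p ^ 4 * P ^ 2) * pairFactor y (p ^ 2 * P) * pairFactor x (p ^ 4 * P)) := by
    simp only [pairFactor]
    field_simp
    ring
  have hsplit (a : K) : pairFactor x a = (1 - x * a) * (1 - x⁻¹ * a) := rfl
  rw [hsplit (p ^ 2 * P)] at h2 ⊢
  rw [hsplit (p ^ 4 * P)] at h4 hcleared ⊢
  obtain ⟨h2, h2'⟩ := mul_ne_zero_iff.1 h2
  obtain ⟨h4, h4'⟩ := mul_ne_zero_iff.1 h4
  generalize 1 - x * (p ^ 2 * P) = r2 at *
  generalize 1 - x * (p ^ 4 * P) = r4 at *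
  generalize 1 - x⁻¹ * (p ^ 2 * P) = s2 at *
  generalize 1 - x⁻¹ * (p ^ 4 * P) = s4 at *
  generalize 1 - x⁻¹ * (p * P) = s1 at *
  generalize 1 - x⁻¹ * (p ^ 3 * P) = s3 at *
  generalize pairFactor y (p * x⁻¹) = y1 at *
  field_simp
  linear_combination -hcleared

/-- The combination of the summands of `truncSum p (x * p ^ 2) y` and `truncSum p (x⁻¹ * p ^ 2) y`
that telescopes. -/
def contiguousTerm (p x y : K) (k : ℕ) : K :=
  altCoeff p k * (1 - p ^ (4 * k + 1)) * pairRatio p y k *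
    (pairFactor y (p * x) * (1 - x⁻¹ * p ^ 2) * pairRatio p (x * p ^ 2) k +
      x * pairFactor y (p * x⁻¹) * (1 - x * p ^ 2) * pairRatio p (x⁻¹ * p ^ 2) k)

/-- The partial sums of `contiguousTerm`, in closed form. -/
def wzCertificate (p x y : K) (k : ℕ) : K :=
  (1 - p) * (1 + x) * pairFactor x (p ^ 2) *
    (altCoeff p k * pairRatio p y k * pairRatio p x k *
      ((1 - p ^ (4 * k + 2)) * pairFactor y (p ^ (2 * k + 1)) / pairFactor x (p ^ (2 * k + 2))))

lemma contiguousTerm_zero {p x y : K} (hx : x ≠ 0) (hy : y ≠ 0)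
    (hpole : pairFactor x (p ^ 2) ≠ 0) : contiguousTerm p x y 0 = wzCertificate p x y 0 := by
  have hcancel : wzCertificate p x y 0 =
      (1 - p) * (1 + x) * (1 - p ^ 2) * pairFactor y p := by
    simp only [wzCertificate, altCoeff, prod_range_zero, pairRatio_zero, mul_zero, zero_add,
      pow_one]
    field_simp
  rw [hcancel]
  simp only [contiguousTerm, altCoeff, prod_range_zero, pairRatio_zero, mul_zero, zero_add,
    pow_one, pairFactor]
  field_simp
  ring

lemma contiguousTerm_succ {p x : K} (hp : p ≠ 0) (hx : x ≠ 0) (hx1 : x ≠ 1)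
    (hpole : ∀ i : ℕ, pairFactor x (p ^ (2 * i + 2)) ≠ 0) (y : K) (k : ℕ) :
    contiguousTerm p x y (k + 1) =
      altCoeff p (k + 1) * pairRatio p y (k + 1) * pairRatio p x k *
        (pairFactor x (p ^ 2) / (p * (1 - x))) * ((1 - p ^ (4 * k + 5)) *
          (pairFactor y (p * x) * ((1 - x * p ^ (2 * k + 1)) * (1 - x * p ^ (2 * k + 3)) /
              ((1 - x * p ^ (2 * k + 2)) * (1 - x * p ^ (2 * k + 4)))) -
            x ^ 2 * pairFactor y (p * x⁻¹) *
              ((1 - x⁻¹ * p ^ (2 * k + 1)) * (1 - x⁻¹ * p ^ (2 * k + 3)) /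
                ((1 - x⁻¹ * p ^ (2 * k + 2)) * (1 - x⁻¹ * p ^ (2 * k + 4)))))) := by
  have hpole' : ∀ i : ℕ, pairFactor x⁻¹ (p ^ (2 * i + 2)) ≠ 0 := by
    simpa only [pairFactor_inv_left]
  have hsub_inv : (1 - x⁻¹)⁻¹ = -x * (1 - x)⁻¹ := by
    rw [show 1 - x⁻¹ = -((1 - x) / x) by field_simp; ring, inv_neg, inv_div]
    ring
  have hfactor : pairFactor x (p ^ 2) = (1 - x * p ^ 2) * (1 - x⁻¹ * p ^ 2) := rfl
  rw [contiguousTerm, pairRatio_mul_sq_succ hp hx hx1 hpole,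
    pairRatio_mul_sq_succ hp (inv_ne_zero hx) (inv_ne_one.2 hx1) hpole', pairRatio_inv, hfactor]
  simp only [div_eq_mul_inv, mul_inv, hsub_inv]
  ring

lemma wzCertificate_add_contiguousTerm {p x y : K} (hp : p ≠ 0) (hx : x ≠ 0) (hx1 : x ≠ 1)
    (hy : y ≠ 0) (hpx : ∀ i : ℕ, pairFactor x (p ^ (2 * i + 2)) ≠ 0)
    (hpy : ∀ i : ℕ, pairFactor y (p ^ (2 * i + 2)) ≠ 0) (k : ℕ)
    (hk : 1 - p ^ (4 * k + 4) ≠ 0) :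
    wzCertificate p x y k + contiguousTerm p x y (k + 1) = wzCertificate p x y (k + 1) := by
  have hsub : 1 - x ≠ 0 := sub_ne_zero.2 hx1.symm
  have hpow (i : ℕ) : p ^ (2 * k + i) = p ^ i * p ^ (2 * k) := by ring
  have hpow_sq (i : ℕ) : p ^ (4 * k + i) = p ^ i * (p ^ (2 * k)) ^ 2 := by ring
  have hx2 := hpx k
  have hx4 := hpx (k + 1)
  have hy2 := hpy k
  rw [contiguousTerm_succ hp hx hx1 hpx]
  simp only [wzCertificate, pairRatio_succ, altCoeff_succ, show 2 * (k + 1) = 2 * k + 2 by ring,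
    show 4 * (k + 1) = 4 * k + 4 by ring, add_assoc, Nat.reduceAdd] at hx4 ⊢
  simp only [hpow, hpow_sq, pow_one] at hk hx2 hx4 hy2 ⊢
  rw [wz_identity hx hy p _ hx2 hx4]
  generalize pairFactor x (p ^ 2 * p ^ (2 * k)) = x2 at *
  generalize pairFactor x (p ^ 4 * p ^ (2 * k)) = x4 at *
  generalize pairFactor y (p ^ 2 * p ^ (2 * k)) = y2 at *
  generalize 1 - p ^ 4 * (p ^ (2 * k)) ^ 2 = w4 at *
  field_simp
  ring

lemma sum_contiguousTerm {p x y : K} (hp : p ≠ 0) (hx : x ≠ 0) (hx1 : x ≠ 1)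
    (hy : y ≠ 0) (hpx : ∀ i : ℕ, pairFactor x (p ^ (2 * i + 2)) ≠ 0)
    (hpy : ∀ i : ℕ, pairFactor y (p ^ (2 * i + 2)) ≠ 0) (hroot : ∀ i, p ^ (i + 1) ≠ 1) (J : ℕ) :
    ∑ k ∈ range (J + 1), contiguousTerm p x y k = wzCertificate p x y J := by
  induction J with
  | zero => rw [sum_range_one, contiguousTerm_zero hx hy (hpx 0)]
  | succ J ih =>
    rw [sum_range_succ, ih, wzCertificate_add_contiguousTerm hp hx hx1 hy hpx hpy J
      (sub_ne_zero.2 (hroot _).symm)]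

lemma contiguous_relation {p x y : K} {J : ℕ} (hp : p ≠ 0) (hx : x ≠ 0) (hx1 : x ≠ 1)
    (hy : y ≠ 0) (hpx : ∀ i : ℕ, pairFactor x (p ^ (2 * i + 2)) ≠ 0)
    (hpy : ∀ i : ℕ, pairFactor y (p ^ (2 * i + 2)) ≠ 0) (hroot : ∀ i, p ^ (i + 1) ≠ 1)
    (hterm : pairRatio p x J = 0) :
    pairFactor y (p * x) * (1 - x⁻¹ * p ^ 2) * truncSum p (x * p ^ 2) y J +
      x * pairFactor y (p * x⁻¹) * (1 - x * p ^ 2) * truncSum p (x⁻¹ * p ^ 2) y J = 0 := by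
  have hsum := sum_contiguousTerm hp hx hx1 hy hpx hpy hroot J
  rw [wzCertificate, hterm, mul_zero, zero_mul, mul_zero] at hsum
  rw [truncSum, truncSum, mul_sum, mul_sum, ← sum_add_distrib, ← hsum]
  exact sum_congr rfl fun k _ ↦ by rw [contiguousTerm]; ring

lemma pairRatio_pow_odd_eq_zero {p : K} (hp : p ≠ 0) {i k : ℕ} (hik : i < k) :
    pairRatio p (p ^ (2 * i + 1)) k = 0 :=
  prod_eq_zero (mem_range.2 hik) <| by
    rw [pairFactor, inv_mul_cancel₀ (pow_ne_zero _ hp), sub_self, mul_zero, zero_div]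

lemma truncSum_self {p : K} (hp : p ≠ 0) (y : K) (J : ℕ) : truncSum p p y J = 1 - p := by
  have hvanish (k : ℕ) : pairRatio p p (k + 1) = 0 := by
    simpa only [mul_zero, zero_add, pow_one] using pairRatio_pow_odd_eq_zero hp k.succ_pos
  simp only [truncSum, sum_range_succ', hvanish, mul_zero, sum_const_zero, zero_add, pairRatio_zero,
    altCoeff, prod_range_zero, pow_one, one_mul, mul_one]

lemma pairFactor_pow_ne_zero {p : K} (hp : p ≠ 0) (hroot : ∀ i, p ^ (i + 1) ≠ 1) {a b : ℕ}
    (hab : a ≠ b) (hb : 0 < b) : pairFactor (p ^ a) (p ^ b) ≠ 0 := by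
  have hne {c : ℕ} (hc : 0 < c) : p ^ c ≠ 1 := by
    simpa only [Nat.sub_add_cancel hc] using hroot (c - 1)
  refine mul_ne_zero (sub_ne_zero.2 ?_) (sub_ne_zero.2 fun h ↦ ?_)
  · rw [← pow_add]
    exact (hne (by omega)).symm
  · have hpow : p ^ a = p ^ b := by
      rw [← mul_inv_cancel_left₀ (pow_ne_zero a hp) (p ^ b), ← h, mul_one]
    rcases hab.lt_or_gt with h' | h'
    · exact hne (Nat.sub_pos_of_lt h') <| by
        rw [pow_sub₀ p hp h'.le, hpow, mul_inv_cancel₀ (pow_ne_zero b hp)]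
    · exact hne (Nat.sub_pos_of_lt h') <| by
        rw [pow_sub₀ p hp h'.le, hpow, mul_inv_cancel₀ (pow_ne_zero b hp)]

lemma truncSum_pow_step {p y : K} (hp : p ≠ 0) (hroot : ∀ i, p ^ (i + 1) ≠ 1) (hy : y ≠ 0)
    (hpy : ∀ i : ℕ, pairFactor y (p ^ (2 * i + 2)) ≠ 0) {j J : ℕ} (hJ : 2 * j < J) :
    pairFactor y (p ^ (4 * j + 2)) * (p - p ^ (4 * j)) * truncSum p (p ^ (4 * j + 3)) y J =
      p * pairFactor y (p ^ (4 * j)) * (1 - p ^ (4 * j + 3)) *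
        truncSum p ((p ^ (4 * j + 1))⁻¹ * p ^ 2) y J := by
  have hrel := contiguous_relation (x := p ^ (4 * j + 1)) hp (pow_ne_zero _ hp) (hroot _) hy
    (fun i ↦ pairFactor_pow_ne_zero hp hroot (by omega) (by omega)) hpy hroot
    (by simpa only [← mul_assoc, Nat.reduceMul] using pairRatio_pow_odd_eq_zero hp hJ)
  have hinv : p * (p ^ (4 * j + 1))⁻¹ = (p ^ (4 * j))⁻¹ := by
    rw [pow_succ]
    field_simp
  rw [hinv, pairFactor_inv_right y (pow_ne_zero _ hp) hy] at hrel
  simp only [show p * p ^ (4 * j + 1) = p ^ (4 * j + 2) by ring,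
    show p ^ (4 * j + 1) * p ^ 2 = p ^ (4 * j + 3) by ring] at hrel
  generalize truncSum p ((p ^ (4 * j + 1))⁻¹ * p ^ 2) y J = S at *
  generalize truncSum p (p ^ (4 * j + 3)) y J = T at *
  rw [pow_succ p (4 * j)] at hrel
  field_simp at hrel
  linear_combination -hrel

lemma truncSum_pow_eq_prod {p y : K} (hp : p ≠ 0) (hroot : ∀ i, p ^ (i + 1) ≠ 1) (hy : y ≠ 0)
    (hpy : ∀ i : ℕ, pairFactor y (p ^ (2 * i + 2)) ≠ 0) {j J : ℕ} (hJ : 2 * j < J) :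
    truncSum p (p ^ (4 * j + 3)) y J = -p * (1 - p ^ (4 * j + 3)) *
      ∏ i ∈ range (j + 1), pairFactor y (p ^ (4 * i)) / pairFactor y (p ^ (4 * i + 2)) := by
  have hpole (i : ℕ) : pairFactor y (p ^ (4 * i + 2)) ≠ 0 := by
    simpa only [← mul_assoc, Nat.reduceMul] using hpy (2 * i)
  have hstep := truncSum_pow_step hp hroot hy hpy hJ
  induction j with
  | zero =>
    have hinv : p⁻¹ * p ^ 2 = p := by field_simp
    have hsub : 1 - p ≠ 0 := sub_ne_zero.2 (by simpa only [zero_add, pow_one] using (hroot 0).symm)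
    have h2 := hpole 0
    simp only [mul_zero, zero_add, pow_zero, pow_one, hinv, truncSum_self hp, prod_range_one]
      at hstep h2 ⊢
    generalize truncSum p (p ^ 3) y J = S at *
    field_simp
    refine mul_right_cancel₀ hsub ?_
    linear_combination -hstep
  | succ j ih =>
    have hinv : (p ^ (4 * (j + 1) + 1))⁻¹ * p ^ 2 = (p ^ (4 * j + 3))⁻¹ := by
      rw [show 4 * (j + 1) + 1 = 4 * j + 3 + 2 by ring, pow_add]
      field_simp
    have hsub : 1 - p ^ (4 * j + 3) ≠ 0 := sub_ne_zero.2 (hroot _).symm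
    have h2 := hpole (j + 1)
    rw [hinv, truncSum_inv, ih (by omega) (truncSum_pow_step hp hroot hy hpy (by omega))] at hstep
    rw [prod_range_succ]
    generalize ∏ i ∈ range (j + 1), pairFactor y (p ^ (4 * i)) / pairFactor y (p ^ (4 * i + 2)) = R
      at *
    generalize truncSum p (p ^ (4 * (j + 1) + 3)) y J = S at *
    rw [show p - p ^ (4 * (j + 1)) = p * (1 - p ^ (4 * j + 3)) by ring] at hstep
    field_simp at hstep ⊢
    linear_combination hstep

end TruncatedSum

section Evaluation

open Polynomial

variable {F L : Type*} [Field F] [Field L] [Algebra F L] {f g t : RatFunc F} {v w z : L}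

/-- The rational function `f` is regular at `z`, with value `v` there. As `RatFunc.eval` returns
junk at poles, this relation, and not a function, is what is compatible with the operations. -/
def HasValueAt (f : RatFunc F) (v z : L) : Prop :=
  ∃ r s : F[X], aeval z s ≠ 0 ∧ f = algebraMap F[X] (RatFunc F) r / algebraMap F[X] (RatFunc F) s ∧
    v = aeval z r / aeval z s

lemma algebraMap_ratFunc_ne_zero_of_aeval_ne_zero {s : F[X]} (hs : aeval z s ≠ 0) :
    algebraMap F[X] (RatFunc F) s ≠ 0 :=
  (map_ne_zero_iff _ (RatFunc.algebraMap_injective F)).2 fun h ↦ hs (by rw [h, map_zero])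

lemma hasValueAt_algebraMap (r : F[X]) (z : L) :
    HasValueAt (algebraMap F[X] (RatFunc F) r) (aeval z r) z :=
  ⟨r, 1, by simp, by simp, by simp⟩

lemma hasValueAt_one (z : L) : HasValueAt (1 : RatFunc F) 1 z := by
  simpa only [map_one] using hasValueAt_algebraMap (F := F) 1 z

lemma hasValueAt_zero (z : L) : HasValueAt (0 : RatFunc F) 0 z := by
  simpa only [map_zero] using hasValueAt_algebraMap (F := F) 0 z

namespace HasValueAt

lemma of_eq (hf : HasValueAt f v z) (h : v = w) : HasValueAt f w z := h ▸ hf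

lemma add (hf : HasValueAt f v z) (hg : HasValueAt g w z) : HasValueAt (f + g) (v + w) z := by
  obtain ⟨r, s, hs, rfl, rfl⟩ := hf
  obtain ⟨r', s', hs', rfl, rfl⟩ := hg
  refine ⟨r * s' + s * r', s * s', by simp [hs, hs'], ?_, by simp [div_add_div _ _ hs hs']⟩
  rw [div_add_div _ _ (algebraMap_ratFunc_ne_zero_of_aeval_ne_zero hs)
    (algebraMap_ratFunc_ne_zero_of_aeval_ne_zero hs')]
  simp only [map_add, map_mul]

lemma mul (hf : HasValueAt f v z) (hg : HasValueAt g w z) : HasValueAt (f * g) (v * w) z := by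
  obtain ⟨r, s, hs, rfl, rfl⟩ := hf
  obtain ⟨r', s', hs', rfl, rfl⟩ := hg
  exact ⟨r * r', s * s', by simp [hs, hs'], by simp only [map_mul, div_mul_div_comm],
    by simp only [map_mul, div_mul_div_comm]⟩

lemma neg (hf : HasValueAt f v z) : HasValueAt (-f) (-v) z := by
  obtain ⟨r, s, hs, rfl, rfl⟩ := hf
  exact ⟨-r, s, hs, by rw [map_neg, neg_div], by rw [map_neg, neg_div]⟩

lemma sub (hf : HasValueAt f v z) (hg : HasValueAt g w z) : HasValueAt (f - g) (v - w) z := by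
  simpa only [sub_eq_add_neg] using hf.add hg.neg

lemma inv (hf : HasValueAt f v z) (hv : v ≠ 0) : HasValueAt f⁻¹ v⁻¹ z := by
  obtain ⟨r, s, -, rfl, rfl⟩ := hf
  exact ⟨s, r, (div_ne_zero_iff.1 hv).1, inv_div _ _, inv_div _ _⟩

lemma div (hf : HasValueAt f v z) (hg : HasValueAt g w z) (hw : w ≠ 0) :
    HasValueAt (f / g) (v / w) z := by
  simpa only [div_eq_mul_inv] using hf.mul (hg.inv hw)

lemma pow (hf : HasValueAt f v z) (k : ℕ) : HasValueAt (f ^ k) (v ^ k) z := by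
  induction k with
  | zero => simpa only [pow_zero] using hasValueAt_one z
  | succ k ih => simpa only [pow_succ] using ih.mul hf

lemma sum {ι : Type*} {s : Finset ι} {φ : ι → RatFunc F} {ν : ι → L}
    (h : ∀ i ∈ s, HasValueAt (φ i) (ν i) z) : HasValueAt (∑ i ∈ s, φ i) (∑ i ∈ s, ν i) z := by
  classical
  induction s using Finset.induction_on with
  | empty => exact hasValueAt_zero z
  | insert i s hi ih =>
    rw [sum_insert hi, sum_insert hi]
    exact (h i (mem_insert_self i s)).add (ih fun j hj ↦ h j (mem_insert_of_mem hj))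

lemma prod {ι : Type*} {s : Finset ι} {φ : ι → RatFunc F} {ν : ι → L}
    (h : ∀ i ∈ s, HasValueAt (φ i) (ν i) z) : HasValueAt (∏ i ∈ s, φ i) (∏ i ∈ s, ν i) z := by
  classical
  induction s using Finset.induction_on with
  | empty => exact hasValueAt_one z
  | insert i s hi ih =>
    rw [prod_insert hi, prod_insert hi]
    exact (h i (mem_insert_self i s)).mul (ih fun j hj ↦ h j (mem_insert_of_mem hj))

lemma ne_zero (hf : HasValueAt f v z) (hv : v ≠ 0) : f ≠ 0 := by
  obtain ⟨r, s, hs, rfl, rfl⟩ := hf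
  exact div_ne_zero (algebraMap_ratFunc_ne_zero_of_aeval_ne_zero (div_ne_zero_iff.1 hv).1)
    (algebraMap_ratFunc_ne_zero_of_aeval_ne_zero hs)

end HasValueAt

/-- `f = o(g)` at `z`: the quotient `f / g` is regular at `z` and vanishes there. -/
def IsLittleOAt (f g : RatFunc F) (z : L) : Prop :=
  ∃ u, f = g * u ∧ HasValueAt u 0 z

namespace IsLittleOAt

lemma add {h : RatFunc F} (hf : IsLittleOAt f h z) (hg : IsLittleOAt g h z) :
    IsLittleOAt (f + g) h z := by
  obtain ⟨u, rfl, hu⟩ := hf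
  obtain ⟨u', rfl, hu'⟩ := hg
  exact ⟨u + u', by ring, (hu.add hu').of_eq (add_zero 0)⟩

lemma sum {ι : Type*} {s : Finset ι} {φ : ι → RatFunc F} (h : ∀ i ∈ s, IsLittleOAt (φ i) g z) :
    IsLittleOAt (∑ i ∈ s, φ i) g z := by
  choose! u hu hval using h
  exact ⟨∑ i ∈ s, u i, by rw [mul_sum, sum_congr rfl hu],
    (HasValueAt.sum hval).of_eq sum_const_zero⟩

lemma mul_hasValueAt {h : RatFunc F} (hf : IsLittleOAt f g z) (hh : HasValueAt h v z) :
    IsLittleOAt (f * h) g z := by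
  obtain ⟨u, rfl, hu⟩ := hf
  exact ⟨u * h, mul_assoc _ _ _, (hu.mul hh).of_eq (zero_mul v)⟩

end IsLittleOAt

/-- `f = 1 + l t + o(t)` at `z`; meaningful when `t` vanishes at `z`. -/
def HasLinearTermAt (f t : RatFunc F) (l z : L) : Prop :=
  ∃ ε, f = 1 + t * ε ∧ HasValueAt ε l z

namespace HasLinearTermAt

lemma one (t : RatFunc F) (z : L) : HasLinearTermAt 1 t 0 z :=
  ⟨0, by ring, hasValueAt_zero z⟩

lemma mul (ht : HasValueAt t 0 z) (hf : HasLinearTermAt f t v z) (hg : HasLinearTermAt g t w z) :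
    HasLinearTermAt (f * g) t (v + w) z := by
  obtain ⟨ε, rfl, hε⟩ := hf
  obtain ⟨δ, rfl, hδ⟩ := hg
  exact ⟨ε + δ + t * (ε * δ), by ring,
    ((hε.add hδ).add (ht.mul (hε.mul hδ))).of_eq (by rw [zero_mul, add_zero])⟩

lemma div (ht : HasValueAt t 0 z) (hf : HasLinearTermAt f t v z) (hg : HasLinearTermAt g t w z) :
    HasLinearTermAt (f / g) t (v - w) z := by
  obtain ⟨ε, rfl, hε⟩ := hf
  obtain ⟨δ, rfl, hδ⟩ := hg
  have hden : HasValueAt (1 + t * δ) 1 z :=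
    ((hasValueAt_one z).add (ht.mul hδ)).of_eq (by rw [zero_mul, add_zero])
  have hden0 := hden.ne_zero one_ne_zero
  exact ⟨(ε - δ) / (1 + t * δ), by field_simp; ring,
    ((hε.sub hδ).div hden one_ne_zero).of_eq (div_one _)⟩

lemma prod (ht : HasValueAt t 0 z) {ι : Type*} {s : Finset ι} {φ : ι → RatFunc F} {ν : ι → L}
    (h : ∀ i ∈ s, HasLinearTermAt (φ i) t (ν i) z) :
    HasLinearTermAt (∏ i ∈ s, φ i) t (∑ i ∈ s, ν i) z := by
  classical
  induction s using Finset.induction_on with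
  | empty => exact one t z
  | insert i s hi ih =>
    rw [prod_insert hi, sum_insert hi]
    exact mul ht (h i (mem_insert_self i s)) (ih fun j hj ↦ h j (mem_insert_of_mem hj))

end HasLinearTermAt

/-- `f` has order `e` at `z`, measured with respect to the local parameter `t`. -/
def HasOrderAt (f t : RatFunc F) (e : ℤ) (z : L) : Prop :=
  ∃ u v, f = t ^ e * u ∧ HasValueAt u v z ∧ v ≠ 0

lemma HasValueAt.hasOrderAt (hf : HasValueAt f v z) (hv : v ≠ 0) : HasOrderAt f t 0 z :=
  ⟨f, v, by rw [zpow_zero, one_mul], hf, hv⟩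

namespace HasOrderAt

variable {e e' : ℤ}

lemma mul (ht : t ≠ 0) (hf : HasOrderAt f t e z) (hg : HasOrderAt g t e' z) :
    HasOrderAt (f * g) t (e + e') z := by
  obtain ⟨u, v, rfl, hu, hv⟩ := hf
  obtain ⟨u', v', rfl, hu', hv'⟩ := hg
  exact ⟨u * u', v * v', by rw [zpow_add₀ ht]; ring, hu.mul hu', mul_ne_zero hv hv'⟩

lemma div (ht : t ≠ 0) (hf : HasOrderAt f t e z) (hg : HasOrderAt g t e' z) :
    HasOrderAt (f / g) t (e - e') z := by
  obtain ⟨u, v, rfl, hu, hv⟩ := hf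
  obtain ⟨u', v', rfl, hu', hv'⟩ := hg
  exact ⟨u / u', v / v', by rw [zpow_sub₀ ht, mul_div_mul_comm], hu.div hu' hv', div_ne_zero hv hv'⟩

lemma prod (ht : t ≠ 0) {ι : Type*} {s : Finset ι} {φ : ι → RatFunc F} {ν : ι → ℤ}
    (h : ∀ i ∈ s, HasOrderAt (φ i) t (ν i) z) :
    HasOrderAt (∏ i ∈ s, φ i) t (∑ i ∈ s, ν i) z := by
  classical
  induction s using Finset.induction_on with
  | empty => exact (hasValueAt_one z).hasOrderAt one_ne_zero
  | insert i s hi ih =>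
    rw [prod_insert hi, sum_insert hi]
    exact mul ht (h i (mem_insert_self i s)) (ih fun j hj ↦ h j (mem_insert_of_mem hj))

lemma pow (ht : t ≠ 0) (hf : HasOrderAt f t e z) (k : ℕ) : HasOrderAt (f ^ k) t (k * e) z := by
  simpa only [prod_const, sum_const, card_range, nsmul_eq_mul] using
    prod ht (s := range k) fun _ _ ↦ hf

lemma exists_hasValueAt (ht : HasValueAt t 0 z) (hf : HasOrderAt f t e z) (he : 0 ≤ e) :
    ∃ v, HasValueAt f v z := by
  obtain ⟨u, v, rfl, hu, -⟩ := hf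
  lift e to ℕ using he
  exact ⟨_, by simpa only [zpow_natCast] using (ht.pow e).mul hu⟩

lemma hasValueAt_zero (ht : HasValueAt t 0 z) (hf : HasOrderAt f t e z) (he : 0 < e) :
    HasValueAt f 0 z := by
  obtain ⟨u, v, rfl, hu, -⟩ := hf
  lift e to ℕ using he.le
  rw [zpow_natCast]
  exact ((ht.pow e).mul hu).of_eq (by rw [zero_pow (by omega), zero_mul])

end HasOrderAt

end Evaluation

section Congruence

open Polynomial

variable {L : Type*} [Field L] [CharZero L] {f g : RatFunc ℚ} {z : L} {n : ℕ}

lemma q_ne_zero : q ≠ 0 := RatFunc.X_ne_zero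

lemma one_sub_q_pow (n : ℕ) : 1 - q ^ n = algebraMap ℚ[X] (RatFunc ℚ) (1 - X ^ n) := by
  rw [map_sub, map_one, map_pow, RatFunc.algebraMap_X, q]

lemma q_pow_ne_one (i : ℕ) : q ^ (i + 1) ≠ 1 := by
  refine (sub_ne_zero.1 ?_).symm
  rw [one_sub_q_pow, map_ne_zero_iff _ (RatFunc.algebraMap_injective ℚ)]
  exact sub_ne_zero.2 fun h ↦ by simpa using congrArg (coeff · 0) h

lemma hasValueAt_q_pow (z : L) (k : ℕ) : HasValueAt (q ^ k) (z ^ k) z := by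
  simpa only [map_pow, RatFunc.algebraMap_X, aeval_X, q] using
    hasValueAt_algebraMap (X ^ k : ℚ[X]) z

lemma hasValueAt_q (z : L) : HasValueAt q z z := by
  simpa only [pow_one] using hasValueAt_q_pow z 1

lemma hasValueAt_one_sub_q_pow (z : L) (k : ℕ) : HasValueAt (1 - q ^ k) (1 - z ^ k) z :=
  (hasValueAt_one z).sub (hasValueAt_q_pow z k)

lemma qcong_cyclotomic_pow_of_isLittleOAt (hz : IsPrimitiveRoot z n) (hn : 0 < n)
    {k : ℕ} (h : IsLittleOAt (f - g) ((1 - q ^ n) ^ k) z) :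
    qcong f g (cyclotomic n ℚ ^ (k + 1)) := by
  obtain ⟨_, hu, r, s, hs, rfl, hr⟩ := h
  have hroot : aeval z r = 0 := ((div_eq_zero_iff).1 hr.symm).resolve_right hs
  obtain ⟨c, hc⟩ : cyclotomic n ℚ ∣ r := by
    rw [cyclotomic_eq_minpoly_rat hz hn]
    exact minpoly.dvd ℚ z hroot
  obtain ⟨c', hc'⟩ : cyclotomic n ℚ ∣ 1 - X ^ n :=
    (dvd_sub_comm).1 (cyclotomic.dvd_X_pow_sub_one n ℚ)
  have hcop : IsCoprime s (cyclotomic n ℚ) := by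
    refine ((cyclotomic.irreducible_rat hn).coprime_iff_not_dvd.2 fun ⟨c, hc⟩ ↦ hs ?_).symm
    rw [hc, map_mul, cyclotomic_eq_minpoly_rat hz hn, minpoly.aeval, zero_mul]
  refine ⟨c' ^ k * c, s, hcop.pow_right, ?_⟩
  rw [hu, one_sub_q_pow, hc', hc]
  simp only [map_pow, map_mul]
  ring

lemma qcong_iff_dvd_num {P : ℚ[X]} :
    qcong f g P ↔ P ∣ (f - g).num ∧ IsCoprime (f - g).denom P := by
  constructor
  · rintro ⟨r, s, hs, hf⟩
    rcases eq_or_ne s 0 with rfl | hs0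
    · have hP := isCoprime_zero_left.1 hs
      exact ⟨hP.dvd, isCoprime_one_right.of_isCoprime_of_dvd_right (isUnit_iff_dvd_one.1 hP)⟩
    have hcross : (f - g).num * s = P * r * (f - g).denom := by
      rwa [RatFunc.num_mul_eq_mul_denom_iff hs0, map_mul, mul_div_assoc]
    have hcop := RatFunc.isCoprime_num_denom (f - g)
    exact ⟨hs.symm.dvd_of_dvd_mul_right ⟨r * (f - g).denom, by rw [hcross, mul_assoc]⟩,
      hs.of_isCoprime_of_dvd_left (hcop.symm.dvd_of_dvd_mul_left ⟨P * r, by rw [hcross, mul_comm]⟩)⟩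
  · rintro ⟨⟨c, hc⟩, hcop⟩
    refine ⟨c, (f - g).denom, hcop, ?_⟩
    rw [← mul_div_assoc, ← map_mul, ← hc, RatFunc.num_div_denom]

namespace qcong

lemma mul_of_isCoprime {P Q : ℚ[X]} (hP : qcong f g P) (hQ : qcong f g Q) (h : IsCoprime P Q) :
    qcong f g (P * Q) := by
  rw [qcong_iff_dvd_num] at *
  exact ⟨h.mul_dvd hP.1 hQ.1, hP.2.mul_right hQ.2⟩

lemma prod_of_isCoprime {ι : Type*} {s : Finset ι} {P : ι → ℚ[X]} (h : ∀ i ∈ s, qcong f g (P i))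
    (hcop : (s : Set ι).Pairwise fun i j ↦ IsCoprime (P i) (P j)) : qcong f g (∏ i ∈ s, P i) := by
  simp only [qcong_iff_dvd_num] at *
  exact ⟨prod_dvd_of_coprime hcop fun i hi ↦ (h i hi).1, IsCoprime.prod_right fun i hi ↦ (h i hi).2⟩

lemma div_right {P s : ℚ[X]} (h : qcong f g P) (hs : IsCoprime s P) :
    qcong (f / algebraMap ℚ[X] (RatFunc ℚ) s) (g / algebraMap ℚ[X] (RatFunc ℚ) s) P := by
  obtain ⟨r, s', hs', hf⟩ := h
  refine ⟨r, s' * s, hs'.mul_left hs, ?_⟩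
  rw [← sub_div, hf, map_mul, mul_div_assoc, div_div]

end qcong

lemma qcong_geom_sum_mul_cyclotomic_pow (hn : n ≠ 1) (hn0 : 0 < n) {k : ℕ}
    (htop : qcong f g (cyclotomic n ℚ ^ (k + 1)))
    (hdvd : ∀ d, d ∣ n → d ≠ 1 → qcong f g (cyclotomic d ℚ)) :
    qcong f g ((∑ i ∈ range n, X ^ i) * cyclotomic n ℚ ^ k) := by
  have hsplit : (∑ i ∈ range n, (X : ℚ[X]) ^ i) * cyclotomic n ℚ ^ k =
      cyclotomic n ℚ ^ (k + 1) * ∏ d ∈ n.properDivisors.erase 1, cyclotomic d ℚ := by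
    rw [← prod_cyclotomic_eq_geom_sum hn0 ℚ, ← Nat.insert_self_properDivisors hn0.ne',
      erase_insert_of_ne hn, prod_insert (by simp)]
    ring
  rw [hsplit]
  refine htop.mul_of_isCoprime (qcong.prod_of_isCoprime (fun d hd ↦ ?_)
    fun a _ b _ hab ↦ cyclotomic.isCoprime_rat hab) (IsCoprime.pow_left (IsCoprime.prod_right
      fun d hd ↦ cyclotomic.isCoprime_rat ?_))
  · obtain ⟨hd1, hd⟩ := mem_erase.1 hd
    exact hdvd d (Nat.mem_properDivisors.1 hd).1 hd1
  · exact (Nat.mem_properDivisors.1 (mem_erase.1 hd).2).2.ne'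

end Congruence

section Reflection

variable {K : Type*} [Field K] {p : K} {N : ℕ}

/-- The quotient of consecutive summands `centralCoeff`. -/
def centralRatio (p : K) (i : ℕ) : K :=
  -p * ((1 - p ^ (4 * i + 2)) / (1 - p ^ (4 * i + 4))) *
    ((1 - p ^ (2 * i + 1)) / (1 - p ^ (2 * i + 2))) ^ 4

/-- The denominator of `centralRatio`. -/
def centralDenom (p : K) (i : ℕ) : K := (1 - p ^ (4 * i + 4)) * (1 - p ^ (2 * i + 2)) ^ 4

/-- The coefficient `(-p)^k (p; p²)_k^4 (p²; p⁴)_k / ((p²; p²)_k^4 (p⁴; p⁴)_k)`. -/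
def centralCoeff (p : K) (k : ℕ) : K := ∏ i ∈ range k, centralRatio p i

/-- The summand of the theorem, times `1 - p`. -/
def centralSummand (p : K) (k : ℕ) : K := (1 - p ^ (4 * k + 1)) * centralCoeff p k

/-- The Koebe function `a / (1 - a)²`: to first order in `t = pairFactor x 1`, the factor
`pairFactor x a` is `(1 - a)² (1 + t koebe a)`. -/
def koebe (a : K) : K := a / (1 - a) ^ 2

/-- The logarithmic derivative of `pairRatio p x k` with respect to `pairFactor x 1`, at `x = 1`. -/
def koebeSum (p : K) (k : ℕ) : K :=
  ∑ i ∈ range k, (koebe (p ^ (2 * i + 1)) - koebe (p ^ (2 * i + 2)))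

lemma centralCoeff_zero (p : K) : centralCoeff p 0 = 1 := prod_range_zero _

lemma centralCoeff_succ (p : K) (k : ℕ) :
    centralCoeff p (k + 1) = centralCoeff p k * centralRatio p k := prod_range_succ _ _

lemma altCoeff_mul_pairRatio_one_sq (p : K) (k : ℕ) :
    altCoeff p k * pairRatio p 1 k ^ 2 = centralCoeff p k := by
  simp only [altCoeff, pairRatio, centralCoeff, centralRatio, ← prod_pow, ← prod_mul_distrib,
    pairFactor, inv_one, one_mul, ← sq, ← div_pow, ← pow_mul]
  norm_num

lemma koebe_inv (a : K) : koebe a⁻¹ = koebe a := by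
  rcases eq_or_ne a 0 with rfl | ha
  · rw [inv_zero]
  · rw [koebe, koebe, show 1 - a⁻¹ = -((1 - a) / a) by field_simp; ring]
    field_simp

lemma koebe_pow_eq_of_add_eq {a b : ℕ} (h : p ^ (a + b) = 1) : koebe (p ^ a) = koebe (p ^ b) := by
  rw [eq_inv_of_mul_eq_one_left ((pow_add p a b).symm.trans h), koebe_inv]

lemma pow_mul_one_sub_pow {a b : ℕ} (h : p ^ (a + b) = 1) :
    p ^ a * (1 - p ^ b) = -(1 - p ^ a) := by
  rw [mul_sub, ← pow_add, h]
  ring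

lemma one_sub_pow_mul_ne_zero {n s i : ℕ} (hp : IsPrimitiveRoot p n) (hs : n.Coprime s)
    (hi : ¬ n ∣ i) : 1 - p ^ (s * i) ≠ 0 :=
  sub_ne_zero.2 fun h ↦ hi (hs.dvd_of_dvd_mul_left (hp.dvd_of_pow_eq_one _ h.symm))

lemma one_sub_pow_ne_zero {n i : ℕ} (hp : IsPrimitiveRoot p n) (hi : ¬ n ∣ i) : 1 - p ^ i ≠ 0 := by
  simpa only [one_mul] using one_sub_pow_mul_ne_zero hp n.coprime_one_right hi

lemma one_sub_pow_two_mul_ne_zero {i : ℕ} (hp : IsPrimitiveRoot p (2 * N + 1))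
    (hi : ¬ 2 * N + 1 ∣ i) : 1 - p ^ (2 * i) ≠ 0 :=
  one_sub_pow_mul_ne_zero hp (by simp) hi

lemma one_sub_pow_two_mul_ne_zero_of_le {m i : ℕ} (hp : IsPrimitiveRoot p (4 * m + 3))
    (hi : i ≤ 2 * m) : 1 - p ^ (2 * i + 2) ≠ 0 := by
  rw [show 4 * m + 3 = 2 * (2 * m + 1) + 1 by ring] at hp
  exact one_sub_pow_two_mul_ne_zero hp (Nat.not_dvd_of_pos_of_lt i.succ_pos (by omega))

lemma centralDenom_ne_zero {i : ℕ} (hp : IsPrimitiveRoot p (2 * N + 1))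
    (hi : ¬ 2 * N + 1 ∣ i + 1) : centralDenom p i ≠ 0 := by
  have htwo := one_sub_pow_two_mul_ne_zero hp hi
  have hfour := one_sub_pow_mul_ne_zero hp
    (Nat.Coprime.pow_right 2 (by simp) : (2 * N + 1).Coprime (2 ^ 2)) hi
  rw [mul_add] at htwo hfour
  exact mul_ne_zero hfour (pow_ne_zero 4 htwo)

lemma sum_range_eq_zero_of_antisymm [CharZero K] {f : ℕ → K}
    (h : ∀ i < N, f (N - 1 - i) = -f i) : ∑ i ∈ range N, f i = 0 := by
  have hneg : ∑ i ∈ range N, f i = -∑ i ∈ range N, f i := by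
    rw [← sum_neg_distrib, ← sum_range_reflect]
    exact sum_congr rfl fun i hi ↦ h i (mem_range.1 hi)
  exact self_eq_neg.1 hneg

lemma centralRatio_eq_reflect (hp : p ^ (2 * N + 1) = 1) {i : ℕ} (hi : i < N) :
    centralRatio p i = p ^ (12 * i + 7) * (centralDenom p (N - 1 - i) / centralDenom p i) := by
  have hfour : p ^ (4 * i + 2) * (1 - p ^ (4 * (N - 1 - i) + 4)) = -(1 - p ^ (4 * i + 2)) :=
    pow_mul_one_sub_pow <| by
      rw [show 4 * i + 2 + (4 * (N - 1 - i) + 4) = (2 * N + 1) * 2 by omega, pow_mul, hp, one_pow]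
  have htwo : p ^ (2 * i + 1) * (1 - p ^ (2 * (N - 1 - i) + 2)) = -(1 - p ^ (2 * i + 1)) :=
    pow_mul_one_sub_pow <| by
      rw [show 2 * i + 1 + (2 * (N - 1 - i) + 2) = 2 * N + 1 by omega, hp]
  have hnum : p ^ (12 * i + 6) * centralDenom p (N - 1 - i) =
      -((1 - p ^ (4 * i + 2)) * (1 - p ^ (2 * i + 1)) ^ 4) := by
    calc p ^ (12 * i + 6) * centralDenom p (N - 1 - i)
        = (p ^ (4 * i + 2) * (1 - p ^ (4 * (N - 1 - i) + 4))) *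
            (p ^ (2 * i + 1) * (1 - p ^ (2 * (N - 1 - i) + 2))) ^ 4 := by
          rw [centralDenom]
          ring
      _ = _ := by
          rw [hfour, htwo]
          ring
  calc centralRatio p i
      = p * (-((1 - p ^ (4 * i + 2)) * (1 - p ^ (2 * i + 1)) ^ 4) / centralDenom p i) := by
        rw [centralRatio, centralDenom, div_pow, neg_div, ← div_mul_div_comm]
        ring
    _ = _ := by
        rw [← hnum]
        ring

lemma centralRatio_mul_reflect (hp : IsPrimitiveRoot p (2 * N + 1)) {i : ℕ} (hi : i < N) :
    centralRatio p i * centralRatio p (N - 1 - i) * p ^ 4 = 1 := by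
  have hi' : N - 1 - i < N := by omega
  have hpow : p ^ (12 * i + 7) * p ^ (12 * (N - 1 - i) + 7) * p ^ 4 = 1 := by
    rw [← pow_add, ← pow_add, show 12 * i + 7 + (12 * (N - 1 - i) + 7) + 4 = (2 * N + 1) * 6 by
      omega, pow_mul, hp.pow_eq_one, one_pow]
  have hd := centralDenom_ne_zero hp (Nat.not_dvd_of_pos_of_lt i.succ_pos (by omega))
  have hd' := centralDenom_ne_zero hp (Nat.not_dvd_of_pos_of_lt (N - 1 - i).succ_pos (by omega))
  rw [centralRatio_eq_reflect hp.pow_eq_one hi, centralRatio_eq_reflect hp.pow_eq_one hi',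
    show N - 1 - (N - 1 - i) = i by omega]
  calc _ = p ^ (12 * i + 7) * p ^ (12 * (N - 1 - i) + 7) * p ^ 4 := by field_simp
    _ = 1 := hpow

lemma centralCoeff_half (hp : IsPrimitiveRoot p (2 * N + 1)) : centralCoeff p N = p := by
  have hexp (M : ℕ) : ∏ i ∈ range M, p ^ (12 * i + 7) = p ^ (6 * M ^ 2 + M) := by
    induction M with
    | zero => simp
    | succ M ih => rw [prod_range_succ, ih, ← pow_add]; congr 1; ring
  have hdenom : ∏ i ∈ range N, centralDenom p (N - 1 - i) / centralDenom p i = 1 := by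
    rw [prod_div_distrib, prod_range_reflect]
    exact div_self (prod_ne_zero_iff.2 fun i hi ↦ centralDenom_ne_zero hp
      (Nat.not_dvd_of_pos_of_lt i.succ_pos (by have := mem_range.1 hi; omega)))
  rw [centralCoeff,
    prod_congr rfl fun i hi ↦ centralRatio_eq_reflect hp.pow_eq_one (mem_range.1 hi),
    prod_mul_distrib, hdenom, mul_one, hexp]
  refine mul_right_cancel₀ (pow_ne_zero (2 * N) (hp.ne_zero (by omega))) ?_
  rw [← pow_add, ← pow_succ', show 6 * N ^ 2 + N + 2 * N = (2 * N + 1) * (3 * N) by ring, pow_mul,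
    hp.pow_eq_one, one_pow]

lemma centralCoeff_reflect (hp : IsPrimitiveRoot p (2 * N + 1)) {k : ℕ} (hk : k ≤ N) :
    centralCoeff p (N - k) = p ^ (4 * k + 1) * centralCoeff p k := by
  induction k with
  | zero => rw [Nat.sub_zero, centralCoeff_half hp, centralCoeff_zero, mul_zero, zero_add, pow_one,
      mul_one]
  | succ k ih =>
    have hratio := centralRatio_mul_reflect hp (i := k) (by omega)
    have hprev := ih (by omega)
    rw [show N - k = N - (k + 1) + 1 by omega, centralCoeff_succ,
      show N - (k + 1) = N - 1 - k by omega] at hprev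
    rw [centralCoeff_succ, show N - (k + 1) = N - 1 - k by omega]
    linear_combination p ^ 4 * centralRatio p k * hprev - centralCoeff p (N - 1 - k) * hratio

lemma centralSummand_reflect (hp : IsPrimitiveRoot p (2 * N + 1)) {k : ℕ} (hk : k ≤ N) :
    centralSummand p (N - k) = -centralSummand p k := by
  have hpow : p ^ (4 * (N - k) + 1) * p ^ (4 * k + 1) = 1 := by
    rw [← pow_add, show 4 * (N - k) + 1 + (4 * k + 1) = (2 * N + 1) * 2 by omega, pow_mul,
      hp.pow_eq_one, one_pow]
  rw [centralSummand, centralSummand, centralCoeff_reflect hp hk]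
  linear_combination -centralCoeff p k * hpow

lemma koebeSum_reflect [CharZero K] (hp : p ^ (2 * N + 1) = 1) {k : ℕ} (hk : k ≤ N) :
    koebeSum p (N - k) = koebeSum p k := by
  have hterm (i : ℕ) (hi : i < N) :
      koebe (p ^ (2 * (N - 1 - i) + 1)) - koebe (p ^ (2 * (N - 1 - i) + 2)) =
        -(koebe (p ^ (2 * i + 1)) - koebe (p ^ (2 * i + 2))) := by
    have hodd : koebe (p ^ (2 * (N - 1 - i) + 1)) = koebe (p ^ (2 * i + 2)) :=
      koebe_pow_eq_of_add_eq <| by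
        rw [show 2 * (N - 1 - i) + 1 + (2 * i + 2) = 2 * N + 1 by omega, hp]
    have heven : koebe (p ^ (2 * (N - 1 - i) + 2)) = koebe (p ^ (2 * i + 1)) :=
      koebe_pow_eq_of_add_eq <| by
        rw [show 2 * (N - 1 - i) + 2 + (2 * i + 1) = 2 * N + 1 by omega, hp]
    rw [hodd, heven, neg_sub]
  induction k with
  | zero => exact sum_range_eq_zero_of_antisymm hterm
  | succ k ih =>
    have hprev := ih (by omega)
    have hk' := hterm k (by omega)
    rw [koebeSum, show N - k = N - (k + 1) + 1 by omega, sum_range_succ, ← koebeSum,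
      show N - (k + 1) = N - 1 - k by omega, hk'] at hprev
    rw [koebeSum, koebeSum, sum_range_succ, ← koebeSum, ← koebeSum,
      show N - (k + 1) = N - 1 - k by omega]
    linear_combination hprev

lemma sum_centralSummand_mul_eq_zero [CharZero K] (hp : IsPrimitiveRoot p (2 * N + 1)) {w : ℕ → K}
    (hw : ∀ k ≤ N, w (N - k) = w k) :
    ∑ k ∈ range (N + 1), centralSummand p k * w k = 0 :=
  sum_range_eq_zero_of_antisymm fun k hk ↦ by
    rw [Nat.add_sub_cancel, centralSummand_reflect hp (by omega), hw k (by omega), neg_mul]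

lemma centralCoeff_eq_zero_of_lt (hp : IsPrimitiveRoot p (2 * N + 1)) {k : ℕ} (hk : N < k) :
    centralCoeff p k = 0 :=
  prod_eq_zero (mem_range.2 hk) <| by
    rw [centralRatio, hp.pow_eq_one, sub_self, zero_div, zero_pow four_ne_zero, mul_zero]

end Reflection

section PrimitiveFactor

variable {L : Type*} [Field L] [CharZero L] {z : L} {n N k m M : ℕ}

/-- The quotient of `(q⁴; q⁴)_m` by `(q²; q⁴)_{m + 1}`. -/
noncomputable def evenPochRatio (m : ℕ) : RatFunc ℚ :=
  (∏ i ∈ range m, (1 - q ^ (4 * i + 4))) / ∏ i ∈ range (m + 1), (1 - q ^ (4 * i + 2))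

/-- The right-hand side of the theorem for `n = 4 m + 3`, times `q - 1`. -/
noncomputable def closedForm (m : ℕ) : RatFunc ℚ :=
  (1 - q ^ (4 * m + 3)) ^ 3 * (q ^ (4 * m + 3))⁻¹ * q * evenPochRatio m ^ 2

lemma q_pow_ne_zero (k : ℕ) : q ^ k ≠ 0 := pow_ne_zero k q_ne_zero

lemma one_sub_q_pow_ne_zero (i : ℕ) : 1 - q ^ (i + 1) ≠ 0 := sub_ne_zero.2 (q_pow_ne_one i).symm

lemma pairFactor_one_left {K : Type*} [Field K] (a : K) : pairFactor 1 a = (1 - a) ^ 2 := by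
  rw [pairFactor, inv_one, one_mul, sq]

lemma pairFactor_one_right {K : Type*} [Field K] {x : K} (hx : x ≠ 0) :
    pairFactor x 1 = (1 - x) ^ 2 * -x⁻¹ := by
  rw [pairFactor]
  field_simp
  ring

lemma hasValueAt_q_pow_inv (hz : z ^ n = 1) : HasValueAt (q ^ n)⁻¹ 1 z := by
  simpa only [hz, inv_one] using (hasValueAt_q_pow z n).inv (by simpa only [hz] using one_ne_zero)

lemma hasValueAt_one_sub_q_pow_zero (hz : z ^ n = 1) : HasValueAt (1 - q ^ n) 0 z :=
  (hasValueAt_one_sub_q_pow z n).of_eq (by rw [hz, sub_self])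

lemma hasValueAt_pairFactor_one (hz : z ^ n = 1) :
    HasValueAt (pairFactor (q ^ n) 1) 0 z := by
  rw [pairFactor_one_right (q_pow_ne_zero n)]
  exact (((hasValueAt_one_sub_q_pow_zero hz).pow 2).mul
    (hasValueAt_q_pow_inv hz).neg).of_eq (by ring)

lemma hasLinearTermAt_pairFactor {a : ℕ} (ha : 1 - z ^ a ≠ 0) :
    HasLinearTermAt (pairFactor (q ^ n) (q ^ a) / pairFactor 1 (q ^ a)) (pairFactor (q ^ n) 1)
      (koebe (z ^ a)) z := by
  have hval := hasValueAt_one_sub_q_pow z a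
  have hne := hval.ne_zero ha
  refine ⟨koebe (q ^ a), ?_, (hasValueAt_q_pow z a).div (hval.pow 2) (pow_ne_zero 2 ha)⟩
  rw [pairFactor_eq_one_sub_sq_add (q_pow_ne_zero n), pairFactor_one_left, koebe]
  field_simp

lemma hasLinearTermAt_pairRatio (hz : IsPrimitiveRoot z (2 * N + 1)) (hk : k ≤ N) :
    HasLinearTermAt (pairRatio q (q ^ (2 * N + 1)) k / pairRatio q 1 k)
      (pairFactor (q ^ (2 * N + 1)) 1) (koebeSum z k) z := by
  have ht := hasValueAt_pairFactor_one hz.pow_eq_one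
  rw [pairRatio, pairRatio, ← prod_div_distrib]
  refine .prod ht fun i hi ↦ ?_
  rw [div_div_div_comm]
  have hik := mem_range.1 hi
  exact .div ht
    (hasLinearTermAt_pairFactor
      (one_sub_pow_ne_zero hz (Nat.not_dvd_of_pos_of_lt (by omega) (by omega))))
    (hasLinearTermAt_pairFactor
      (one_sub_pow_ne_zero hz (Nat.not_dvd_of_pos_of_lt (by omega) (by omega))))

lemma hasValueAt_centralRatio {i : ℕ} (hz : IsPrimitiveRoot z (2 * N + 1))
    (hi : ¬ 2 * N + 1 ∣ i + 1) : HasValueAt (centralRatio q i) (centralRatio z i) z := by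
  obtain ⟨hfour, htwo⟩ := mul_ne_zero_iff.1 (centralDenom_ne_zero hz hi)
  have hval := hasValueAt_one_sub_q_pow z
  exact ((hasValueAt_q z).neg.mul ((hval _).div (hval _) hfour)).mul
    (((hval _).div (hval _) (pow_ne_zero_iff four_ne_zero |>.1 htwo)).pow 4)

lemma hasValueAt_centralCoeff (hz : IsPrimitiveRoot z (2 * N + 1)) (hk : k ≤ 2 * N) :
    HasValueAt (centralCoeff q k) (centralCoeff z k) z :=
  .prod fun i hi ↦ hasValueAt_centralRatio hz
    (Nat.not_dvd_of_pos_of_lt i.succ_pos (by have := mem_range.1 hi; omega))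

lemma hasValueAt_centralSummand (hz : IsPrimitiveRoot z (2 * N + 1)) (hk : k ≤ 2 * N) :
    HasValueAt (centralSummand q k) (centralSummand z k) z :=
  (hasValueAt_one_sub_q_pow z _).mul (hasValueAt_centralCoeff hz hk)

lemma isLittleOAt_centralSummand (hz : IsPrimitiveRoot z (2 * N + 1)) (hNk : N < k)
    (hk : k ≤ 2 * N) : IsLittleOAt (centralSummand q k) ((1 - q ^ (2 * N + 1)) ^ 4) z := by
  have hndvd {i : ℕ} (hi : i < 2 * N) : ¬ 2 * N + 1 ∣ i + 1 :=
    Nat.not_dvd_of_pos_of_lt i.succ_pos (by omega)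
  have hratio : IsLittleOAt (centralRatio q N) ((1 - q ^ (2 * N + 1)) ^ 4) z := by
    obtain ⟨hfour, htwo⟩ := mul_ne_zero_iff.1 (centralDenom_ne_zero hz (hndvd (i := N) (by omega)))
    have hval := hasValueAt_one_sub_q_pow z
    refine ⟨-q * ((1 - q ^ (4 * N + 2)) / (1 - q ^ (4 * N + 4))) / (1 - q ^ (2 * N + 2)) ^ 4, ?_,
      (((hasValueAt_q z).neg.mul ((hval _).div (hval _) hfour)).div
        ((hval _).pow 4) htwo).of_eq ?_⟩
    · rw [centralRatio, div_pow]
      ring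
    · rw [show 4 * N + 2 = (2 * N + 1) * 2 by ring, pow_mul, hz.pow_eq_one]
      ring
  rw [centralSummand, centralCoeff, ← mul_prod_erase _ _ (mem_range.2 hNk), mul_left_comm]
  refine hratio.mul_hasValueAt ((hasValueAt_one_sub_q_pow z _).mul (.prod fun i hi ↦
    hasValueAt_centralRatio hz (hndvd ?_)))
  have := mem_range.1 (mem_of_mem_erase hi)
  omega

lemma truncSum_one_one {K : Type*} [Field K] (p : K) (N : ℕ) :
    truncSum p 1 1 N = ∑ k ∈ range (N + 1), centralSummand p k :=
  sum_congr rfl fun k _ ↦ by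
    rw [centralSummand, ← altCoeff_mul_pairRatio_one_sq]
    ring

lemma pairFactor_one_q_pow_ne_zero (i : ℕ) : pairFactor (1 : RatFunc ℚ) (q ^ (i + 1)) ≠ 0 := by
  rw [pairFactor_one_left]
  exact pow_ne_zero 2 (one_sub_q_pow_ne_zero i)

lemma pairFactor_q_pow_one_ne_zero (i : ℕ) : pairFactor (q ^ (i + 1)) 1 ≠ 0 := by
  rw [pairFactor_one_right (q_pow_ne_zero _)]
  exact mul_ne_zero (pow_ne_zero 2 (one_sub_q_pow_ne_zero i))
    (neg_ne_zero.2 (inv_ne_zero (q_pow_ne_zero _)))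

lemma pairRatio_q_one_ne_zero (k : ℕ) : pairRatio q 1 k ≠ 0 :=
  prod_ne_zero_iff.2 fun _ _ ↦
    div_ne_zero (pairFactor_one_q_pow_ne_zero _) (pairFactor_one_q_pow_ne_zero _)

lemma truncSum_one_sub_truncSum {K : Type*} [Field K] (p x : K) (N : ℕ) :
    truncSum p 1 1 N - 2 * truncSum p x 1 N + truncSum p x x N =
      ∑ k ∈ range (N + 1),
        altCoeff p k * (1 - p ^ (4 * k + 1)) * (pairRatio p x k - pairRatio p 1 k) ^ 2 := by
  simp only [truncSum, mul_sum, ← sum_sub_distrib, ← sum_add_distrib]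
  exact sum_congr rfl fun k _ ↦ by ring

lemma truncSum_q_pow_one_eq_zero (m : ℕ) :
    truncSum q (q ^ (4 * m + 3)) 1 (2 * m + 1) = 0 := by
  rw [truncSum_pow_eq_prod q_ne_zero q_pow_ne_one one_ne_zero
      (fun i ↦ pairFactor_one_q_pow_ne_zero _) (Nat.lt_succ_self _),
    prod_eq_zero (mem_range.2 m.succ_pos), mul_zero]
  rw [mul_zero, pow_zero, pairFactor_one_left, sub_self, sq, zero_mul, zero_div]

lemma isLittleOAt_sum_centralSummand_add_truncSum (hz : IsPrimitiveRoot z (4 * m + 3)) :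
    IsLittleOAt (∑ k ∈ range (2 * m + 2), centralSummand q k +
      truncSum q (q ^ (4 * m + 3)) (q ^ (4 * m + 3)) (2 * m + 1))
      ((1 - q ^ (4 * m + 3)) ^ 4) z := by
  have hn : 4 * m + 3 = 2 * (2 * m + 1) + 1 := by ring
  rw [hn] at hz
  have hlin (k : ℕ) (hk : k ∈ range (2 * m + 2)) :=
    hasLinearTermAt_pairRatio hz (Nat.le_of_lt_succ (mem_range.1 hk))
  choose! ε hε hval using hlin
  rw [← hn] at hz hε
  have hdiff := truncSum_one_sub_truncSum q (q ^ (4 * m + 3)) (2 * m + 1)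
  rw [truncSum_q_pow_one_eq_zero, truncSum_one_one, mul_zero, sub_zero] at hdiff
  have hterm (k : ℕ) (hk : k ∈ range (2 * m + 2)) :
      altCoeff q k * (1 - q ^ (4 * k + 1)) *
        (pairRatio q (q ^ (4 * m + 3)) k - pairRatio q 1 k) ^ 2 =
      pairFactor (q ^ (4 * m + 3)) 1 ^ 2 * (centralSummand q k * ε k ^ 2) := by
    rw [(div_eq_iff (pairRatio_q_one_ne_zero k)).1 (hε k hk), centralSummand,
      ← altCoeff_mul_pairRatio_one_sq]
    ring
  rw [hdiff, sum_congr rfl hterm, ← mul_sum, pairFactor_one_right (q_pow_ne_zero _), mul_pow,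
    ← pow_mul, mul_assoc]
  refine ⟨_, rfl, ((hasValueAt_q_pow_inv hz.pow_eq_one).neg.pow 2 |>.mul (.sum fun k hk ↦
    (hasValueAt_centralSummand (hn ▸ hz) ?_).mul ((hval k hk).pow 2))).of_eq ?_⟩
  · have := mem_range.1 hk
    omega
  · rw [sum_centralSummand_mul_eq_zero (hn ▸ hz) fun k hk ↦ by
      rw [koebeSum_reflect (hn ▸ hz.pow_eq_one) hk], mul_zero]

lemma evenPochRatio_ne_zero (m : ℕ) : evenPochRatio m ≠ 0 :=
  div_ne_zero (prod_ne_zero_iff.2 fun _ _ ↦ one_sub_q_pow_ne_zero _)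
    (prod_ne_zero_iff.2 fun _ _ ↦ one_sub_q_pow_ne_zero _)

lemma exists_hasValueAt_evenPochRatio (hz : IsPrimitiveRoot z (4 * m + 3)) :
    ∃ v, HasValueAt (evenPochRatio m) v z :=
  ⟨_, .div (.prod fun _ _ ↦ hasValueAt_one_sub_q_pow z _)
    (.prod fun _ _ ↦ hasValueAt_one_sub_q_pow z _) (prod_ne_zero_iff.2 fun i hi ↦ by
      have := one_sub_pow_two_mul_ne_zero_of_le hz (i := 2 * i) (by have := mem_range.1 hi; omega)
      rwa [← mul_assoc] at this)⟩

lemma exists_hasLinearTermAt_prod_pairFactor (hz : IsPrimitiveRoot z (4 * m + 3)) :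
    ∃ l, HasLinearTermAt
      ((∏ i ∈ range (m + 1), pairFactor (q ^ (4 * m + 3)) (q ^ (4 * i)) /
        pairFactor (q ^ (4 * m + 3)) (q ^ (4 * i + 2))) /
          (pairFactor (q ^ (4 * m + 3)) 1 * evenPochRatio m ^ 2))
      (pairFactor (q ^ (4 * m + 3)) 1) l z := by
  have ht := hasValueAt_pairFactor_one hz.pow_eq_one
  have hnum (i : ℕ) (hi : i ∈ range m) := hasLinearTermAt_pairFactor (n := 4 * m + 3)
    (one_sub_pow_two_mul_ne_zero_of_le hz (i := 2 * i + 1) (by have := mem_range.1 hi; omega))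
  have hden (i : ℕ) (hi : i ∈ range (m + 1)) := hasLinearTermAt_pairFactor (n := 4 * m + 3)
    (one_sub_pow_two_mul_ne_zero_of_le hz (i := 2 * i) (by have := mem_range.1 hi; omega))
  have hlin := (HasLinearTermAt.prod ht hnum).div ht (.prod ht hden)
  have ht0 := pairFactor_q_pow_one_ne_zero (4 * m + 2)
  refine ⟨∑ i ∈ range m, koebe (z ^ (2 * (2 * i + 1) + 2)) -
    ∑ i ∈ range (m + 1), koebe (z ^ (2 * (2 * i) + 2)), ?_⟩
  convert hlin using 1
  simp only [evenPochRatio, prod_div_distrib, pairFactor_one_left, prod_pow]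
  rw [prod_range_succ' (fun i ↦ pairFactor (q ^ (4 * m + 3)) (q ^ (4 * i)))]
  simp only [mul_add, ← mul_assoc, Nat.reduceMul, mul_one, mul_zero, pow_zero, add_assoc,
    Nat.reduceAdd]
  field_simp

lemma isLittleOAt_closedForm_sub_truncSum (hz : IsPrimitiveRoot z (4 * m + 3)) :
    IsLittleOAt (closedForm m - truncSum q (q ^ (4 * m + 3)) (q ^ (4 * m + 3)) (2 * m + 1))
      ((1 - q ^ (4 * m + 3)) ^ 4) z := by
  obtain ⟨l, ε, hprod, hε⟩ := exists_hasLinearTermAt_prod_pairFactor hz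
  obtain ⟨v, hv⟩ := exists_hasValueAt_evenPochRatio hz
  have hcoeff := (((hasValueAt_q z).mul ((hasValueAt_q_pow_inv hz.pow_eq_one).pow 2)).mul
    (hv.pow 2)).mul hε
  refine ⟨(1 - q ^ (4 * m + 3)) * (q * (q ^ (4 * m + 3))⁻¹ ^ 2 * evenPochRatio m ^ 2 * ε), ?_,
    ((hasValueAt_one_sub_q_pow_zero hz.pow_eq_one).mul hcoeff).of_eq (zero_mul _)⟩
  rw [truncSum_pow_eq_prod q_ne_zero q_pow_ne_one (q_pow_ne_zero _)
      (fun i ↦ pairFactor_pow_ne_zero q_ne_zero q_pow_ne_one (by omega) (by omega))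
      (Nat.lt_succ_self _),
    (div_eq_iff (mul_ne_zero (pairFactor_q_pow_one_ne_zero _)
      (pow_ne_zero 2 (evenPochRatio_ne_zero m)))).1 hprod,
    pairFactor_one_right (q_pow_ne_zero _), closedForm]
  ring

lemma isLittleOAt_sum_centralSummand_add_closedForm (hz : IsPrimitiveRoot z (4 * m + 3))
    (hM : 2 * m + 1 ≤ M) (hM' : M ≤ 4 * m + 2) :
    IsLittleOAt (∑ k ∈ range (M + 1), centralSummand q k + closedForm m)
      ((1 - q ^ (4 * m + 3)) ^ 4) z := by
  have htail : IsLittleOAt (∑ k ∈ Ico (2 * m + 2) (M + 1), centralSummand q k)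
      ((1 - q ^ (4 * m + 3)) ^ 4) z := .sum fun k hk ↦ by
    obtain ⟨hk, hk'⟩ := mem_Ico.1 hk
    rw [show 4 * m + 3 = 2 * (2 * m + 1) + 1 by ring] at hz ⊢
    exact isLittleOAt_centralSummand hz (by omega) (by omega)
  convert ((isLittleOAt_sum_centralSummand_add_truncSum hz).add
    (isLittleOAt_closedForm_sub_truncSum hz)).add htail using 1
  rw [← sum_range_add_sum_Ico _ (show 2 * m + 2 ≤ M + 1 by omega)]
  ring

end PrimitiveFactor

section ProperFactor

variable {L : Type*} [Field L] [CharZero L] {z : L} {h k : ℕ}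

lemma hasOrderAt_one_sub_q_pow {d a : ℕ} (hz : IsPrimitiveRoot z d) (ha : a ≠ 0) :
    HasOrderAt (1 - q ^ a) (1 - q ^ d) (if d ∣ a then 1 else 0) z := by
  split_ifs with hda
  · obtain ⟨c, rfl⟩ := hda
    refine ⟨∑ i ∈ range c, (q ^ d) ^ i, c, ?_, ?_, Nat.cast_ne_zero.2 (right_ne_zero_of_mul ha)⟩
    · rw [zpow_one, pow_mul, mul_neg_geom_sum]
    · exact (HasValueAt.sum fun i _ ↦ (hasValueAt_q_pow z d).pow i).of_eq (by simp [hz.pow_eq_one])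
  · exact (hasValueAt_one_sub_q_pow z a).hasOrderAt (one_sub_pow_ne_zero hz hda)

lemma two_mul_add_one_dvd_two_mul {a : ℕ} : 2 * h + 1 ∣ 2 * a ↔ 2 * h + 1 ∣ a :=
  Nat.Coprime.dvd_mul_left (by simp)

lemma hasOrderAt_one_sub_q_pow_two_mul {a : ℕ} (hz : IsPrimitiveRoot z (2 * h + 1)) (ha : a ≠ 0) :
    HasOrderAt (1 - q ^ (2 * a)) (1 - q ^ (2 * h + 1)) (if 2 * h + 1 ∣ a then 1 else 0) z := by
  simpa only [two_mul_add_one_dvd_two_mul] using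
    hasOrderAt_one_sub_q_pow hz (mul_ne_zero two_ne_zero ha)

lemma hasOrderAt_centralRatio (hz : IsPrimitiveRoot z (2 * h + 1)) (i : ℕ) :
    HasOrderAt (centralRatio q i) (1 - q ^ (2 * h + 1))
      (5 * ((if 2 * h + 1 ∣ 2 * i + 1 then 1 else 0) - if 2 * h + 1 ∣ i + 1 then 1 else 0)) z := by
  have ht := one_sub_q_pow_ne_zero (2 * h)
  have hodd := hasOrderAt_one_sub_q_pow hz (a := 2 * i + 1) (by omega)
  have hodd' := hasOrderAt_one_sub_q_pow_two_mul hz (a := 2 * i + 1) (by omega)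
  have heven := hasOrderAt_one_sub_q_pow_two_mul hz (a := i + 1) (by omega)
  have heven' := hasOrderAt_one_sub_q_pow_two_mul hz (a := 2 * (i + 1)) (by omega)
  rw [centralRatio, show 4 * i + 2 = 2 * (2 * i + 1) by ring,
    show 4 * i + 4 = 2 * (2 * (i + 1)) by ring, show 2 * i + 2 = 2 * (i + 1) by ring]
  simp only [two_mul_add_one_dvd_two_mul] at heven'
  convert (((hasValueAt_q z).neg.hasOrderAt (neg_ne_zero.2 (hz.ne_zero (by omega)))).mul ht
    (hodd'.div ht heven')).mul ht ((hodd.div ht heven).pow ht 4) using 1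
  push_cast
  ring

lemma card_filter_dvd_succ_le (h k : ℕ) :
    #{i ∈ range k | 2 * h + 1 ∣ i + 1} ≤ #{i ∈ range k | 2 * h + 1 ∣ 2 * i + 1} := by
  refine card_le_card_of_injOn (· - h) (fun i hi ↦ ?_) fun i hi j hj hij ↦ ?_
  · obtain ⟨hik, hdvd⟩ := mem_filter.1 hi
    have hle := Nat.le_of_dvd i.succ_pos hdvd
    refine mem_filter.2 ⟨mem_range.2 ((Nat.sub_le i h).trans_lt (mem_range.1 hik)), ?_⟩
    refine (Nat.dvd_add_left (dvd_refl (2 * h + 1))).1 ?_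
    rw [show 2 * (i - h) + 1 + (2 * h + 1) = 2 * (i + 1) by omega]
    exact hdvd.mul_left 2
  · have hi' := Nat.le_of_dvd i.succ_pos (mem_filter.1 hi).2
    have hj' := Nat.le_of_dvd j.succ_pos (mem_filter.1 hj).2
    simp only at hij
    omega

lemma card_filter_dvd_two_mul_add_one_le (h m : ℕ) :
    #{i ∈ range (m + 1) | 2 * h + 1 ∣ 2 * i + 1} ≤ #{i ∈ range m | 2 * h + 1 ∣ i + 1} + 1 := by
  have hmem {i : ℕ} (hi : i ∈ {i ∈ range (m + 1) | 2 * h + 1 ∣ 2 * i + 1}.erase h) :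
      h < i ∧ i ≤ m ∧ 2 * h + 1 ∣ i - h := by
    obtain ⟨hne, hi⟩ := mem_erase.1 hi
    obtain ⟨him, hdvd⟩ := mem_filter.1 hi
    have hle := Nat.le_of_dvd (by omega) hdvd
    refine ⟨by omega, Nat.le_of_lt_succ (mem_range.1 him), two_mul_add_one_dvd_two_mul.1 ?_⟩
    refine (Nat.dvd_add_left (dvd_refl (2 * h + 1))).1 ?_
    rwa [show 2 * (i - h) + (2 * h + 1) = 2 * i + 1 by omega]
  refine tsub_le_iff_right.1 (pred_card_le_card_erase (a := h) |>.trans ?_)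
  refine card_le_card_of_injOn (· - h - 1) (fun i hi ↦ ?_) fun i hi j hj hij ↦ ?_
  · obtain ⟨hhi, him, hdvd⟩ := hmem hi
    refine mem_filter.2 ⟨mem_range.2 (show i - h - 1 < m by omega), ?_⟩
    rwa [show i - h - 1 + 1 = i - h by omega]
  · have hi' := (hmem hi).1
    have hj' := (hmem hj).1
    simp only at hij
    omega

lemma exists_hasValueAt_centralCoeff (hz : IsPrimitiveRoot z (2 * h + 1)) (k : ℕ) :
    ∃ v, HasValueAt (centralCoeff q k) v z := by
  refine (HasOrderAt.prod (one_sub_q_pow_ne_zero (2 * h))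
    fun i _ ↦ hasOrderAt_centralRatio hz i).exists_hasValueAt
    (hasValueAt_one_sub_q_pow_zero hz.pow_eq_one) ?_
  rw [← mul_sum, sum_sub_distrib, sum_boole, sum_boole]
  have := card_filter_dvd_succ_le h k
  omega

lemma hasOrderAt_evenPochRatio (hz : IsPrimitiveRoot z (2 * h + 1)) (m : ℕ) :
    HasOrderAt (evenPochRatio m) (1 - q ^ (2 * h + 1))
      (#{i ∈ range m | 2 * h + 1 ∣ i + 1} - #{i ∈ range (m + 1) | 2 * h + 1 ∣ 2 * i + 1}) z := by
  have ht := one_sub_q_pow_ne_zero (2 * h)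
  have hnum (i : ℕ) := hasOrderAt_one_sub_q_pow_two_mul hz (a := 2 * (i + 1)) (by omega)
  have hden (i : ℕ) := hasOrderAt_one_sub_q_pow_two_mul hz (a := 2 * i + 1) (by omega)
  simp only [two_mul_add_one_dvd_two_mul] at hnum
  rw [← sum_boole, ← sum_boole, evenPochRatio]
  convert HasOrderAt.div ht (.prod ht fun i _ ↦ hnum i) (.prod ht fun i _ ↦ hden i) using 5 <;> ring

lemma hasValueAt_closedForm (hz : IsPrimitiveRoot z (2 * h + 1)) {m : ℕ}
    (hdvd : 2 * h + 1 ∣ 4 * m + 3) : HasValueAt (closedForm m) 0 z := by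
  have ht := one_sub_q_pow_ne_zero (2 * h)
  have hord := hasOrderAt_one_sub_q_pow hz (a := 4 * m + 3) (by omega)
  rw [if_pos hdvd] at hord
  have hcard := card_filter_dvd_two_mul_add_one_le h m
  have hzero := ((hord.pow ht 3).mul ht ((hasOrderAt_evenPochRatio hz m).pow ht 2)).hasValueAt_zero
    (hasValueAt_one_sub_q_pow_zero hz.pow_eq_one) (by push_cast; omega)
  have hinv := hasValueAt_q_pow_inv ((hz.pow_eq_one_iff_dvd _).2 hdvd)
  convert (hinv.mul (hasValueAt_q z)).mul hzero using 1
  · rw [closedForm]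
    ring
  · rw [mul_zero]

lemma centralRatio_mul_add {K : Type*} [Field K] {p : K} {d : ℕ} (hp : p ^ d = 1) (a i : ℕ) :
    centralRatio p (d * a + i) = centralRatio p i := by
  have hpow (c j : ℕ) : p ^ (c * (d * a + i) + j) = p ^ (c * i + j) := by
    rw [show c * (d * a + i) + j = d * (c * a) + (c * i + j) by ring, pow_add, pow_mul, hp,
      one_pow, one_mul]
  rw [centralRatio, hpow, hpow, hpow, hpow, centralRatio]

lemma exists_hasValueAt_centralSummand_mul_add (hz : IsPrimitiveRoot z (2 * h + 1)) (a : ℕ) :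
    ∃ v, ∀ i ≤ 2 * h,
      HasValueAt (centralSummand q ((2 * h + 1) * a + i)) (v * centralSummand z i) z := by
  obtain ⟨v, hv⟩ := exists_hasValueAt_centralCoeff hz ((2 * h + 1) * a)
  refine ⟨v, fun i hi ↦ ?_⟩
  have hprod : HasValueAt (∏ j ∈ range i, centralRatio q ((2 * h + 1) * a + j))
      (centralCoeff z i) z := .prod fun j hj ↦ by
    rw [← centralRatio_mul_add hz.pow_eq_one a j]
    refine hasValueAt_centralRatio hz ?_
    rw [add_assoc, Nat.dvd_add_right (dvd_mul_right _ _)]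
    exact Nat.not_dvd_of_pos_of_lt j.succ_pos (by have := mem_range.1 hj; omega)
  convert (hasValueAt_one_sub_q_pow z (4 * ((2 * h + 1) * a + i) + 1)).mul (hv.mul hprod) using 1
  · rw [centralSummand, centralCoeff, prod_range_add, centralCoeff]
  · rw [show 4 * ((2 * h + 1) * a + i) + 1 = (2 * h + 1) * (4 * a) + (4 * i + 1) by ring, pow_add,
      pow_mul, hz.pow_eq_one, one_pow, one_mul, centralSummand]
    ring

lemma sum_centralSummand_eq_zero (hz : IsPrimitiveRoot z (2 * h + 1)) (hk : h < k) :
    ∑ i ∈ range k, centralSummand z i = 0 := by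
  have htail : ∑ i ∈ Ico (h + 1) k, centralSummand z i = 0 := sum_eq_zero fun i hi ↦ by
    rw [centralSummand, centralCoeff_eq_zero_of_lt hz (mem_Ico.1 hi).1, mul_zero]
  rw [← sum_range_add_sum_Ico _ (Nat.succ_le_of_lt hk), htail, add_zero]
  simpa only [mul_one] using sum_centralSummand_mul_eq_zero hz (w := fun _ ↦ 1) fun _ _ ↦ rfl

lemma hasValueAt_sum_centralSummand (hz : IsPrimitiveRoot z (2 * h + 1)) (a : ℕ) (hk : h < k)
    (hk' : k ≤ 2 * h + 1) :
    HasValueAt (∑ i ∈ range ((2 * h + 1) * a + k), centralSummand q i) 0 z := by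
  have hblock (a : ℕ) {k : ℕ} (hk : h < k) (hk' : k ≤ 2 * h + 1) :
      HasValueAt (∑ i ∈ range k, centralSummand q ((2 * h + 1) * a + i)) 0 z := by
    obtain ⟨v, hv⟩ := exists_hasValueAt_centralSummand_mul_add hz a
    refine (HasValueAt.sum fun i hi ↦
      hv i (by have := mem_range.1 hi; omega)).of_eq ?_
    rw [← mul_sum, sum_centralSummand_eq_zero hz hk, mul_zero]
  rw [sum_range_add]
  refine (HasValueAt.add ?_ (hblock a hk hk')).of_eq (add_zero 0)
  clear hk hk'
  induction a with
  | zero => exact hasValueAt_zero z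
  | succ a ih =>
    rw [mul_add_one, sum_range_add]
    exact (ih.add (hblock a (by omega) le_rfl)).of_eq (add_zero 0)

end ProperFactor

section Translation

open Polynomial

variable {n m M : ℕ}

lemma one_sub_q : 1 - q = algebraMap ℚ[X] (RatFunc ℚ) (1 - X) := by
  simpa only [pow_one] using one_sub_q_pow 1

lemma isCoprime_one_sub_X_geom_sum_mul (hn : n ≠ 1) (hn0 : 0 < n) (k : ℕ) :
    IsCoprime (1 - X : ℚ[X]) ((∑ i ∈ range n, X ^ i) * cyclotomic n ℚ ^ k) := by
  rw [← neg_sub, IsCoprime.neg_left_iff, ← cyclotomic_one, ← prod_cyclotomic_eq_geom_sum hn0 ℚ]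
  exact .mul_right
    (.prod_right fun d hd ↦ cyclotomic.isCoprime_rat (ne_of_mem_erase hd).symm)
    (cyclotomic.isCoprime_rat hn.symm).pow_right

lemma centralSummand_div_one_sub_q (k : ℕ) :
    centralSummand q k / (1 - q) = (-1) ^ k * qint (4 * k + 1) *
      (qpoch q (q ^ 2) k ^ 4 * qpoch (q ^ 2) (q ^ 4) k /
        (qpoch (q ^ 2) (q ^ 2) k ^ 4 * qpoch (q ^ 4) (q ^ 4) k)) * q ^ k := by
  have hint : qint (4 * k + 1) = (1 - q ^ (4 * k + 1)) / (1 - q) := by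
    rw [qint]
    norm_cast
  have hpow (c d i : ℕ) : 1 - q ^ c * (q ^ d) ^ i = 1 - q ^ (d * i + c) := by
    rw [← pow_mul, ← pow_add, add_comm]
  have hcoeff : centralCoeff q k = (-q) ^ k *
      ((qpoch (q ^ 2) (q ^ 4) k / qpoch (q ^ 4) (q ^ 4) k) *
        (qpoch (q ^ 1) (q ^ 2) k / qpoch (q ^ 2) (q ^ 2) k) ^ 4) := by
    simp only [centralCoeff, centralRatio, prod_mul_distrib, prod_pow, prod_div_distrib, prod_const,
      card_range, qpoch, hpow, mul_assoc]
  rw [centralSummand, hcoeff, hint, pow_one, neg_pow]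
  ring

lemma neg_closedForm_div_one_sub_q (m : ℕ) :
    -closedForm m / (1 - q) =
      -(qint (4 * m + 3 : ℕ) ^ 3) * (q ^ (1 - ((4 * m + 3 : ℕ) : ℤ)) / (1 + q) ^ 2) *
        (qpoch (q ^ 4) (q ^ 4) m ^ 2 / qpoch (q ^ 6) (q ^ 4) m ^ 2) := by
  have hnum : ∏ i ∈ range m, (1 - q ^ (4 * i + 4)) = qpoch (q ^ 4) (q ^ 4) m :=
    prod_congr rfl fun i _ ↦ by ring
  have hden : ∏ i ∈ range (m + 1), (1 - q ^ (4 * i + 2)) =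
      qpoch (q ^ 6) (q ^ 4) m * ((1 - q) * (1 + q)) := by
    rw [prod_range_succ']
    exact congrArg₂ _ (prod_congr rfl fun i _ ↦ by ring) (by ring)
  rw [closedForm, evenPochRatio, hnum, hden, qint, zpow_natCast, zpow_sub₀ q_ne_zero, zpow_one,
    zpow_natCast]
  generalize 1 - q = a
  generalize 1 + q = b
  ring

lemma qcong_cyclotomic_sum_centralSummand (hM : M = 2 * m + 1 ∨ M = 4 * m + 2) {d : ℕ}
    (hd : d ∣ 4 * m + 3) :
    qcong (∑ k ∈ range (M + 1), centralSummand q k) (-closedForm m) (cyclotomic d ℚ) := by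
  obtain ⟨c, hc⟩ := hd
  obtain ⟨⟨h, rfl⟩, ⟨c, rfl⟩⟩ := Nat.odd_mul.1 (hc ▸ ⟨2 * m + 1, by ring⟩ : Odd (d * c))
  have hz := Complex.isPrimitiveRoot_exp (2 * h + 1) (by omega)
  have hsum : HasValueAt (∑ k ∈ range (M + 1), centralSummand q k) 0
      (Complex.exp (2 * Real.pi * Complex.I / (2 * h + 1 : ℕ))) := by
    rcases hM with rfl | rfl
    · rw [show 2 * m + 1 + 1 = (2 * h + 1) * c + (h + 1) by linarith]
      exact hasValueAt_sum_centralSummand hz c (by omega) (by omega)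
    · rw [show 4 * m + 2 + 1 = (2 * h + 1) * (2 * c) + (2 * h + 1) by linarith]
      exact hasValueAt_sum_centralSummand hz (2 * c) (by omega) le_rfl
  have hval := hsum.add (hasValueAt_closedForm hz ⟨_, hc⟩)
  rw [add_zero, ← sub_neg_eq_add] at hval
  simpa only [zero_add, pow_one] using
    qcong_cyclotomic_pow_of_isLittleOAt (k := 0) hz (by omega) ⟨_, by rw [pow_zero, one_mul], hval⟩

lemma qcong_sum_centralSummand (hM : M = 2 * m + 1 ∨ M = 4 * m + 2) :
    qcong (∑ k ∈ range (M + 1), centralSummand q k) (-closedForm m)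
      ((∑ i ∈ range (4 * m + 3), X ^ i) * cyclotomic (4 * m + 3) ℚ ^ 4) := by
  have hz := Complex.isPrimitiveRoot_exp (4 * m + 3) (by omega)
  refine qcong_geom_sum_mul_cyclotomic_pow (by omega) (by omega)
    (qcong_cyclotomic_pow_of_isLittleOAt hz (by omega) ?_)
    fun d hd _ ↦ qcong_cyclotomic_sum_centralSummand hM hd
  rw [sub_neg_eq_add]
  exact isLittleOAt_sum_centralSummand_add_closedForm hz (by omega) (by omega)

end Translation

theorem stmt17 (n : ℕ) (hpos : 0 < n) (hmod : n % 4 = 3) (M : ℕ)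
    (hM : M = (n - 1) / 2 ∨ M = n - 1) :
    qcong
      (∑ k ∈ Finset.range (M + 1),
        (-1 : RatFunc ℚ) ^ k * qint (4 * k + 1) *
          (qpoch q (q ^ 2) k ^ 4 * qpoch (q ^ 2) (q ^ 4) k /
            (qpoch (q ^ 2) (q ^ 2) k ^ 4 * qpoch (q ^ 4) (q ^ 4) k)) * q ^ k)
      (-(qint n ^ 3) * (q ^ (1 - (n : ℤ)) / (1 + q) ^ 2) *
        (qpoch (q ^ 4) (q ^ 4) ((n - 3) / 4) ^ 2 /
          qpoch (q ^ 6) (q ^ 4) ((n - 3) / 4) ^ 2))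
      ((∑ i ∈ Finset.range n, Polynomial.X ^ i) * Polynomial.cyclotomic n ℚ ^ 4) := by
  obtain ⟨m, rfl⟩ : ∃ m, n = 4 * m + 3 := ⟨n / 4, by omega⟩
  rw [show (4 * m + 3 - 3) / 4 = m by omega, ← neg_closedForm_div_one_sub_q,
    sum_congr rfl fun k _ ↦ (centralSummand_div_one_sub_q k).symm, ← sum_div,
    one_sub_q]
  exact (qcong_sum_centralSummand (by omega)).div_right
    (isCoprime_one_sub_X_geom_sum_mul (by omega) hpos 4)
end
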